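/- Let 1 ≤ x₊ ≤ x₋ be integers and let f be a cylinder function on Ω depending only on the coordinates in ⟦−x₋, −x₊⟧ with μ(f) = 0. Then for every ω ∈ LO_0 and all 0 ≤ s ≤ t: | ∫ P_{t−s}(ω, dη) ∫ P_s(η, dξ) f(ξ_{X(η)+·}) | ≤ Var_μ(f)^{1/2} · (1/min(p,q))^{x₋} · e^{−s·gap}, where ξ_{X(η)+·} denotes the configuration ξ translated so that its value at site y is ξ_{X(η)+y}, and the outer integral runs over η ∈ LO. (Relaxation at time t in a window centered at the position of the front at the intermediate time t−s.) -/

import Mathlib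

open MeasureTheory ProbabilityTheory Filter Topology

noncomputable section

/-- The configuration space of the East model on `ℤ`: `0` ↔ `false` (empty), `1` ↔ `true`. -/
abbrev Config : Type := ℤ → Bool

/-- The configuration `ω` flipped at site `x`. -/
def flipAt (ω : Config) (x : ℤ) : Config := fun y => if y = x then !ω x else ω y

/-- `f` depends only on the coordinates in `S`. -/
def DependsOnF (f : Config → ℝ) (S : Set ℤ) : Prop :=
  ∀ ω ω' : Config, (∀ x ∈ S, ω x = ω' x) → f ω = f ω'

/-- The set `A` depends only on the coordinates in `S`. -/
def DependsOnSet (A : Set Config) (S : Set ℤ) : Prop :=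
  ∀ ω ω' : Config, (∀ x ∈ S, ω x = ω' x) → (ω ∈ A ↔ ω' ∈ A)

/-- A cylinder (local) function: depends on finitely many coordinates. -/
def IsCylinder (f : Config → ℝ) : Prop := ∃ S : Finset ℤ, DependsOnF f ↑S

/-- The East generator at density `p` of ones. -/
def eastGen (p : ℝ) (f : Config → ℝ) (ω : Config) : ℝ :=
  ∑' x : ℤ, (if ω (x + 1) = false then (1 : ℝ) else 0) *
    (if ω x = false then p else 1 - p) * (f (flipAt ω x) - f ω)

/-- Spatial translation: `(shift y ω) x = ω (x + y)`. -/
def shift (y : ℤ) (ω : Config) : Config := fun x => ω (x + y)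

/-- Left-occupied configurations: identically `1` on a left half-line, with an empty site. -/
def LO : Set Config := {ω | (∃ y : ℤ, ∀ x < y, ω x = true) ∧ ∃ x, ω x = false}

/-- The front: position of the left-most zero. -/
def front (ω : Config) : ℤ := sInf {x : ℤ | ω x = false}

/-- Left-occupied configurations with front at the origin. -/
def LO₀ : Set Config := {ω ∈ LO | front ω = 0}

/-- The configuration seen at distance `L` behind the front. -/
def θL (L : ℤ) (ω : Config) : Config := fun x =>
  if x < 0 then true else if x = 0 then false else ω (front ω + L + x)

/-- `f` averaged over the coordinate at site `1` w.r.t. Bernoulli(p). -/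
def avg1 (p : ℝ) (f : Config → ℝ) (ω : Config) : ℝ :=
  p * f (Function.update ω 1 true) + (1 - p) * f (Function.update ω 1 false)

/-- The East process on `ℤ` at density `p`, together with its equilibrium measure. -/
structure EastProcess where
  /-- equilibrium density of ones -/
  p : ℝ
  hp0 : 0 < p
  hp1 : p < 1
  /-- the Markov semigroup -/
  P : ℝ → Kernel Config Config
  markov : ∀ t : ℝ, IsMarkovKernel (P t)
  P0 : P 0 = Kernel.id
  semigroup : ∀ s t : ℝ, 0 ≤ s → 0 ≤ t → P (t + s) = (P s).comp (P t)
  feller : ∀ t : ℝ, 0 ≤ t → ∀ f : Config → ℝ, Continuous f →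
    Continuous fun ω : Config => ∫ η, f η ∂(P t ω)
  timeCont : ∀ f : Config → ℝ, Continuous f → ∀ ω : Config,
    Continuous fun t : ℝ => ∫ η, f η ∂(P t ω)
  shiftComm : ∀ t : ℝ, 0 ≤ t → ∀ y : ℤ, ∀ ω : Config,
    P t (shift y ω) = Measure.map (shift y) (P t ω)
  generator : ∀ f : Config → ℝ, IsCylinder f → ∀ ω : Config,
    HasDerivWithinAt (fun u : ℝ => ∫ η, f η ∂(P u ω)) (eastGen p f ω) (Set.Ici 0) 0
  /-- the product Bernoulli(p) measure -/
  μ : Measure Config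
  μprob : IsProbabilityMeasure μ
  μprod : ∀ (S : Finset ℤ) (σ : ℤ → Bool),
    μ {ω : Config | ∀ x ∈ S, ω x = σ x} = ∏ x ∈ S, ENNReal.ofReal (if σ x then p else 1 - p)
  /-- LO is stable for the dynamics -/
  loStable : ∀ t : ℝ, 0 ≤ t → ∀ ω ∈ LO, P t ω LO = 1

/-- The set of Rayleigh quotients defining the spectral gap. -/
def gapSet (E : EastProcess) : Set ℝ :=
  {r | ∃ f : Config → ℝ, IsCylinder f ∧ 0 < variance f E.μ ∧
    r = (-∫ ω, f ω * eastGen E.p f ω ∂E.μ) / variance f E.μ}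

/-- The spectral gap of the East process. -/
def gap (E : EastProcess) : ℝ := sInf (gapSet E)

/-- The product measure `μ̃`: all ones on the negative half-line, a zero at the origin,
Bernoulli(p) on the positive half-line. -/
def IsMuTilde (p : ℝ) (μt : Measure Config) : Prop :=
  IsProbabilityMeasure μt ∧
  ∀ (S : Finset ℤ) (σ : ℤ → Bool),
    μt {ω : Config | ∀ x ∈ S, ω x = σ x} =
      ∏ x ∈ S, ENNReal.ofReal
        (if x < 0 then (if σ x then 1 else 0)
         else if x = 0 then (if σ x then 0 else 1)
         else (if σ x then p else 1 - p))

/-- The law at time `t` of the process seen from the front started from `π`. -/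
def Qt (E : EastProcess) (t : ℝ) (π : Measure Config) : Measure Config :=
  Measure.map (θL 0) (π.bind fun ω => E.P t ω)


/-! ### Single-site averages -/

/-- average over site `x` -/
def Av (p : ℝ) (x : ℤ) (g : Config → ℝ) : Config → ℝ := fun ω =>
  p * g (Function.update ω x true) + (1 - p) * g (Function.update ω x false)

/-- the East constraint -/
def cc (x : ℤ) (ω : Config) : ℝ := if ω (x + 1) = false then (1 : ℝ) else 0

/-- average over the sites `a, …, a+K-1` -/
def Ew (p : ℝ) (a : ℤ) : ℕ → (Config → ℝ) → Config → ℝ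
  | 0, g => g
  | K + 1, g => Av p (a + K) (Ew p a K g)

/-- truncated generator -/
def LM (p : ℝ) (a : ℤ) (m : ℕ) (g : Config → ℝ) : Config → ℝ := fun ω =>
  ∑ i ∈ Finset.range m, cc (a + i) ω * (Av p (a + i) g ω - g ω)

/-- Euler step -/
def TT (p : ℝ) (a : ℤ) (m : ℕ) (δ : ℝ) (g : Config → ℝ) : Config → ℝ := fun ω =>
  g ω + δ * LM p a m g ω

/-- independence of site `x` -/
def Indep1 (x : ℤ) (h : Config → ℝ) : Prop := ∀ ω b, h (Function.update ω x b) = h ω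

lemma cc_nonneg (x : ℤ) (ω : Config) : 0 ≤ cc x ω := by unfold cc; split_ifs <;> norm_num
lemma cc_le_one (x : ℤ) (ω : Config) : cc x ω ≤ 1 := by unfold cc; split_ifs <;> norm_num

lemma cc_indep {x y : ℤ} (h : y ≠ x + 1) : Indep1 y (cc x) := by
  intro ω b
  simp only [cc, Function.update_of_ne h.symm]

lemma Av_update (p : ℝ) (x : ℤ) (g : Config → ℝ) : Indep1 x (Av p x g) := by
  intro ω b; simp [Av]

lemma Av_add (p : ℝ) (x : ℤ) (g h : Config → ℝ) :
    Av p x (fun ω => g ω + h ω) = fun ω => Av p x g ω + Av p x h ω := by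
  funext ω; simp only [Av]; ring

lemma Av_smul (p : ℝ) (x : ℤ) (c : ℝ) (g : Config → ℝ) :
    Av p x (fun ω => c * g ω) = fun ω => c * Av p x g ω := by
  funext ω; simp only [Av]; ring

lemma Av_const (p : ℝ) (x : ℤ) (c : ℝ) : Av p x (fun _ => c) = fun _ => c := by
  funext ω; simp only [Av]; ring

lemma Av_mul (p : ℝ) (x : ℤ) {c : Config → ℝ} (hc : Indep1 x c) (g : Config → ℝ) :
    Av p x (fun ω => c ω * g ω) = fun ω => c ω * Av p x g ω := by
  funext ω; simp only [Av, hc ω]; ring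

lemma Av_of_indep (p : ℝ) (x : ℤ) {g : Config → ℝ} (hc : Indep1 x g) : Av p x g = g := by
  funext ω; simp only [Av, hc ω]; ring

lemma Av_idem (p : ℝ) (x : ℤ) (g : Config → ℝ) : Av p x (Av p x g) = Av p x g :=
  Av_of_indep p x (Av_update p x g)

lemma Av_comm (p : ℝ) (x y : ℤ) (g : Config → ℝ) :
    Av p x (Av p y g) = Av p y (Av p x g) := by
  by_cases h : x = y
  · subst h; rfl
  funext ω
  simp only [Av, Function.update_comm h]
  ring

lemma Av_mono {p : ℝ} (h0 : 0 ≤ p) (h1 : p ≤ 1) (x : ℤ) {g h : Config → ℝ} (hgh : ∀ ω, g ω ≤ h ω)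
    (ω : Config) : Av p x g ω ≤ Av p x h ω := by
  unfold Av
  have := mul_le_mul_of_nonneg_left (hgh (Function.update ω x true)) h0
  have := mul_le_mul_of_nonneg_left (hgh (Function.update ω x false)) (sub_nonneg.2 h1)
  linarith

lemma Av_abs_le {p : ℝ} (h0 : 0 ≤ p) (h1 : p ≤ 1) (x : ℤ) {g : Config → ℝ} {B : ℝ}
    (hg : ∀ ω, |g ω| ≤ B) (ω : Config) : |Av p x g ω| ≤ B := by
  rw [abs_le]
  constructor
  · have := Av_mono h0 h1 x (g := fun _ => -B) (fun ω => (abs_le.1 (hg ω)).1) ω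
    rwa [Av_const] at this
  · have := Av_mono h0 h1 x (h := fun _ => B) (fun ω => (abs_le.1 (hg ω)).2) ω
    rwa [Av_const] at this

lemma Av_sq {p : ℝ} (h0 : 0 ≤ p) (h1 : p ≤ 1) (x : ℤ) (g : Config → ℝ) (ω : Config) :
    (Av p x g ω) ^ 2 ≤ Av p x (fun ω => g ω ^ 2) ω := by
  unfold Av
  nlinarith [mul_nonneg (mul_nonneg h0 (sub_nonneg.2 h1))
    (sq_nonneg (g (Function.update ω x true) - g (Function.update ω x false)))]

/-! ### Block averages -/

lemma Ew_add (p : ℝ) (a : ℤ) (K : ℕ) (g h : Config → ℝ) :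
    Ew p a K (fun ω => g ω + h ω) = fun ω => Ew p a K g ω + Ew p a K h ω := by
  induction K with
  | zero => rfl
  | succ K ih => simp only [Ew, ih, Av_add]

lemma Ew_smul (p : ℝ) (a : ℤ) (K : ℕ) (c : ℝ) (g : Config → ℝ) :
    Ew p a K (fun ω => c * g ω) = fun ω => c * Ew p a K g ω := by
  induction K with
  | zero => rfl
  | succ K ih => simp only [Ew, ih, Av_smul]

lemma Ew_const (p : ℝ) (a : ℤ) (K : ℕ) (c : ℝ) : Ew p a K (fun _ => c) = fun _ => c := by
  induction K with
  | zero => rfl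
  | succ K ih => simp only [Ew, ih, Av_const]

lemma Ew_sum (p : ℝ) (a : ℤ) (K : ℕ) {ι : Type*} (s : Finset ι) (g : ι → Config → ℝ) :
    Ew p a K (fun ω => ∑ i ∈ s, g i ω) = fun ω => ∑ i ∈ s, Ew p a K (g i) ω := by
  classical
  induction s using Finset.induction_on with
  | empty => simpa using Ew_const p a K 0
  | insert i s hi ih =>
    simp only [Finset.sum_insert hi]
    rw [Ew_add, ih]

lemma Ew_mono {p : ℝ} (h0 : 0 ≤ p) (h1 : p ≤ 1) (a : ℤ) (K : ℕ) {g h : Config → ℝ}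
    (hgh : ∀ ω, g ω ≤ h ω) (ω : Config) : Ew p a K g ω ≤ Ew p a K h ω := by
  induction K generalizing ω with
  | zero => exact hgh ω
  | succ K ih => exact Av_mono h0 h1 _ ih ω

lemma Ew_mul (p : ℝ) (a : ℤ) (K : ℕ) {c : Config → ℝ} (hc : ∀ i < K, Indep1 (a + (i : ℕ)) c)
    (g : Config → ℝ) :
    Ew p a K (fun ω => c ω * g ω) = fun ω => c ω * Ew p a K g ω := by
  induction K with
  | zero => rfl
  | succ K ih =>
    simp only [Ew]
    rw [ih (fun i hi => hc i (by omega)), Av_mul p _ (hc K (by omega))]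

lemma Ew_Av (p : ℝ) (a : ℤ) (K : ℕ) (x : ℤ) (g : Config → ℝ) :
    Ew p a K (Av p x g) = Av p x (Ew p a K g) := by
  induction K with
  | zero => rfl
  | succ K ih => simp only [Ew]; rw [ih, Av_comm]

lemma Av_Ew_mem (p : ℝ) (a : ℤ) (K i : ℕ) (hi : i < K) (g : Config → ℝ) :
    Av p (a + i) (Ew p a K g) = Ew p a K g := by
  induction K with
  | zero => omega
  | succ K ih =>
    simp only [Ew]
    rcases Nat.lt_succ_iff_lt_or_eq.1 hi with h | rfl
    · rw [Av_comm, ih h]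
    · rw [Av_idem]

lemma Ew_Av_mem (p : ℝ) (a : ℤ) (K i : ℕ) (hi : i < K) (g : Config → ℝ) :
    Ew p a K (Av p (a + i) g) = Ew p a K g := by
  rw [Ew_Av, Av_Ew_mem p a K i hi]

/-- locality of the block average -/
lemma Ew_congr (p : ℝ) (a : ℤ) (K : ℕ) {g h : Config → ℝ} (ω : Config)
    (hgh : ∀ η : Config, (∀ x, x ∉ Set.Ico a (a + K) → η x = ω x) → g η = h η) :
    Ew p a K g ω = Ew p a K h ω := by
  induction K generalizing ω with
  | zero => exact hgh ω (fun _ _ => rfl)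
  | succ K ih =>
    have key : ∀ b, Ew p a K g (Function.update ω (a + K) b) =
        Ew p a K h (Function.update ω (a + K) b) := by
      intro b
      apply ih
      intro η hη
      apply hgh
      intro x hx
      have hx1 : x ∉ Set.Ico a (a + (K : ℤ)) := by
        simp only [Set.mem_Ico, not_and, not_lt] at hx ⊢
        push_cast at hx
        intro h; have := hx h; omega
      have hx2 : x ≠ a + K := by
        rintro rfl
        apply hx
        simp only [Set.mem_Ico]
        push_cast
        omega
      rw [hη x hx1, Function.update_of_ne hx2]
    simp only [Ew, Av, key]

/-- the block average does not depend on the block -/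
lemma Ew_dep (p : ℝ) (a : ℤ) (K : ℕ) {g : Config → ℝ} {S : Set ℤ} (hg : DependsOnF g S)
    (ω ω' : Config) (h : ∀ x ∈ S, x ∉ Set.Ico a (a + K) → ω x = ω' x) :
    Ew p a K g ω = Ew p a K g ω' := by
  induction K generalizing ω ω' with
  | zero =>
    apply hg
    intro x hx
    exact h x hx (by simp)
  | succ K ih =>
    have key : ∀ b, Ew p a K g (Function.update ω (a + K) b) =
        Ew p a K g (Function.update ω' (a + K) b) := by
      intro b
      apply ih
      intro x hxS hx
      by_cases hx2 : x = a + K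
      · subst hx2; simp
      · rw [Function.update_of_ne hx2, Function.update_of_ne hx2]
        apply h x hxS
        simp only [Set.mem_Ico, not_and, not_lt] at hx ⊢
        push_cast
        intro h; have := hx h; omega
    simp only [Ew, Av, key]

lemma Ew_ge {p : ℝ} (h0 : 0 < p) (h1 : p < 1) (a : ℤ) (K : ℕ) {g : Config → ℝ}
    (hg : ∀ ω, 0 ≤ g ω) (ω : Config) : (min p (1 - p)) ^ K * g ω ≤ Ew p a K g ω := by
  induction K generalizing ω with
  | zero => simp [Ew]
  | succ K ih =>
    have hm : 0 ≤ min p (1 - p) := le_min h0.le (by linarith)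
    have hpos : ∀ ω, 0 ≤ Ew p a K g ω := fun ω =>
      le_trans (mul_nonneg (pow_nonneg hm _) (hg ω)) (ih ω)
    have hA : min p (1 - p) * Ew p a K g ω ≤ Av p (a + K) (Ew p a K g) ω := by
      have e : Function.update ω (a + (K : ℤ)) (ω (a + K)) = ω := Function.update_eq_self _ _
      unfold Av
      cases hb : ω (a + (K : ℤ)) with
      | true =>
        rw [hb] at e; rw [e]
        have := mul_le_mul_of_nonneg_right (min_le_left p (1 - p)) (hpos ω)
        have := mul_nonneg (by linarith : 0 ≤ 1 - p)
          (hpos (Function.update ω (a + (K : ℤ)) false))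
        linarith
      | false =>
        rw [hb] at e; rw [e]
        have := mul_le_mul_of_nonneg_right (min_le_right p (1 - p)) (hpos ω)
        have := mul_nonneg h0.le
          (hpos (Function.update ω (a + (K : ℤ)) true))
        linarith
    have := mul_le_mul_of_nonneg_left (ih ω) hm
    simp only [Ew]
    calc _ = min p (1 - p) * (min p (1 - p) ^ K * g ω) := by ring
      _ ≤ _ := this
      _ ≤ _ := hA

/-! ### Euler steps -/

lemma LM_abs_le {p : ℝ} (h0 : 0 ≤ p) (h1 : p ≤ 1) (a : ℤ) (m : ℕ) {g : Config → ℝ} {B : ℝ}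
    (hg : ∀ ω, |g ω| ≤ B) (ω : Config) : |LM p a m g ω| ≤ 2 * m * B := by
  unfold LM
  refine (Finset.abs_sum_le_sum_abs _ _).trans ?_
  have : ∀ i ∈ Finset.range m, |cc (a + i) ω * (Av p (a + i) g ω - g ω)| ≤ 2 * B := by
    intro i _
    rw [abs_mul, abs_of_nonneg (cc_nonneg _ _)]
    have e1 := abs_sub (Av p (a + i) g ω) (g ω)
    have e2 := Av_abs_le h0 h1 (a + i) hg ω
    have e3 := hg ω
    calc _ ≤ 1 * |Av p (a + i) g ω - g ω| :=
          mul_le_mul_of_nonneg_right (cc_le_one _ _) (abs_nonneg _)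
      _ ≤ _ := by linarith
  refine (Finset.sum_le_sum this).trans ?_
  simp; linarith

lemma TT_abs_le {p : ℝ} (h0 : 0 ≤ p) (h1 : p ≤ 1) (a : ℤ) (m : ℕ) {δ : ℝ} (hδ : 0 ≤ δ)
    (hδm : δ * m ≤ 1) {g : Config → ℝ} {B : ℝ}
    (hg : ∀ ω, |g ω| ≤ B) (ω : Config) : |TT p a m δ g ω| ≤ B := by
  have e : TT p a m δ g ω = (1 - δ * ∑ i ∈ Finset.range m, cc (a + i) ω) * g ω +
      δ * ∑ i ∈ Finset.range m, cc (a + i) ω * Av p (a + i) g ω := by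
    unfold TT LM
    simp only [mul_sub, Finset.sum_sub_distrib, ← Finset.sum_mul]
    ring
  have hs : ∑ i ∈ Finset.range m, cc (a + i) ω ≤ m := by
    refine (Finset.sum_le_sum (fun (i : ℕ) _ => cc_le_one (a + (i : ℤ)) ω)).trans ?_
    simp
  have hs' : δ * ∑ i ∈ Finset.range m, cc (a + i) ω ≤ 1 :=
    (mul_le_mul_of_nonneg_left hs hδ).trans hδm
  have h2 : |∑ i ∈ Finset.range m, cc (a + i) ω * Av p (a + i) g ω| ≤
      (∑ i ∈ Finset.range m, cc (a + i) ω) * B := by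
    refine (Finset.abs_sum_le_sum_abs _ _).trans ?_
    rw [Finset.sum_mul]
    refine Finset.sum_le_sum (fun i _ => ?_)
    rw [abs_mul, abs_of_nonneg (cc_nonneg _ _)]
    exact mul_le_mul_of_nonneg_left (Av_abs_le h0 h1 _ hg ω) (cc_nonneg _ _)
  rw [e]
  refine (abs_add_le _ _).trans ?_
  rw [abs_mul, abs_mul, abs_of_nonneg hδ, abs_of_nonneg (by linarith : (0:ℝ) ≤ 1 - _)]
  have h3 := mul_le_mul_of_nonneg_left (hg ω)
    (by linarith : (0:ℝ) ≤ 1 - δ * ∑ i ∈ Finset.range m, cc (a + i) ω)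
  have h4 := mul_le_mul_of_nonneg_left h2 hδ
  linarith

lemma Av_sub_abs_le {p : ℝ} (h0 : 0 ≤ p) (h1 : p ≤ 1) (x : ℤ) {g : Config → ℝ} {d : ℝ}
    (ω : Config)
    (hd : |g (Function.update ω x true) - g (Function.update ω x false)| ≤ d) :
    |Av p x g ω - g ω| ≤ d := by
  have e : Function.update ω x (ω x) = ω := Function.update_eq_self _ _
  have hd0 := (abs_nonneg _).trans hd
  cases hb : ω x with
  | true =>
    rw [hb] at e
    have : Av p x g ω - g ω =
        -(1 - p) * (g (Function.update ω x true) - g (Function.update ω x false)) := by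
      rw [Av]; nth_rewrite 3 [← e]; ring
    rw [this, abs_mul, abs_neg, abs_of_nonneg (by linarith)]
    nlinarith [abs_nonneg (g (Function.update ω x true) - g (Function.update ω x false))]
  | false =>
    rw [hb] at e
    have : Av p x g ω - g ω =
        p * (g (Function.update ω x true) - g (Function.update ω x false)) := by
      rw [Av]; nth_rewrite 3 [← e]; ring
    rw [this, abs_mul, abs_of_nonneg (by linarith)]
    nlinarith [abs_nonneg (g (Function.update ω x true) - g (Function.update ω x false))]

/-- propagation of the dependence on a site -/
lemma TT_grad {p : ℝ} (h0 : 0 ≤ p) (h1 : p ≤ 1) (a : ℤ) (m : ℕ) {δ : ℝ} (hδ : 0 ≤ δ)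
    (hδm : δ * m ≤ 1) {g : Config → ℝ} (k : ℕ) {d d' : ℝ}
    (hd : ∀ ω, |g (Function.update ω (a + (k + 1 : ℕ)) true) -
      g (Function.update ω (a + (k + 1 : ℕ)) false)| ≤ d)
    (hd' : ∀ ω, |g (Function.update ω (a + k) true) - g (Function.update ω (a + k) false)| ≤ d')
    (ω : Config) :
    |TT p a m δ g (Function.update ω (a + (k + 1 : ℕ)) true) -
      TT p a m δ g (Function.update ω (a + (k + 1 : ℕ)) false)| ≤ d + δ * d' := by
  set x : ℤ := a + (k + 1 : ℕ) with hx
  set G : Config → ℝ := fun ω => g (Function.update ω x true) - g (Function.update ω x false)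
    with hG
  have hd0 : 0 ≤ d := (abs_nonneg _).trans (hd ω)
  have hd0' : 0 ≤ d' := (abs_nonneg _).trans (hd' ω)
  -- decomposition of each term
  have term : ∀ i ∈ Finset.range m, ∃ c r : ℝ, 0 ≤ c ∧ c ≤ 1 ∧
      |r| ≤ c * d + (if i = k then d' else 0) ∧
      cc (a + i) (Function.update ω x true) *
        (Av p (a + i) g (Function.update ω x true) - g (Function.update ω x true)) -
      cc (a + i) (Function.update ω x false) *
        (Av p (a + i) g (Function.update ω x false) - g (Function.update ω x false)) =
      -c * G ω + r := by
    intro i _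
    by_cases h : i = k
    · subst h
      refine ⟨0, -(Av p (a + i) g (Function.update ω x false) - g (Function.update ω x false)),
        le_rfl, zero_le_one, ?_, ?_⟩
      · rw [abs_neg]
        simpa using Av_sub_abs_le h0 h1 (a + i) (Function.update ω x false) (hd' _)
      · have e1 : cc (a + i) (Function.update ω x true) = 0 := by
          simp [cc, hx, ← add_assoc]
        have e2 : cc (a + i) (Function.update ω x false) = 1 := by
          simp [cc, hx, ← add_assoc]
        rw [e1, e2]; ring
    have hci : ∀ b, cc (a + i) (Function.update ω x b) = cc (a + i) ω := by
      intro b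
      apply cc_indep
      rw [hx]; push_cast; omega
    by_cases h' : i = k + 1
    · subst h'
      refine ⟨cc (a + (k + 1 : ℕ)) ω, 0, cc_nonneg _ _, cc_le_one _ _, ?_, ?_⟩
      · simpa using mul_nonneg (cc_nonneg _ _) hd0
      · rw [hci, hci]
        rw [← hx, Av_update p x g, Av_update p x g]
        simp only [hG]; ring
    · refine ⟨cc (a + i) ω, cc (a + i) ω * Av p (a + i) G ω, cc_nonneg _ _, cc_le_one _ _, ?_, ?_⟩
      · rw [if_neg h, add_zero, abs_mul, abs_of_nonneg (cc_nonneg _ _)]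
        exact mul_le_mul_of_nonneg_left (Av_abs_le h0 h1 _ hd _) (cc_nonneg _ _)
      · rw [hci, hci]
        have hne : x ≠ a + i := by rw [hx]; push_cast; omega
        simp only [hG, Av, Function.update_comm hne]
        ring
  choose! c r hc0 hc1 hr he using term
  have e : TT p a m δ g (Function.update ω x true) - TT p a m δ g (Function.update ω x false) =
      (1 - δ * ∑ i ∈ Finset.range m, c i) * G ω + δ * ∑ i ∈ Finset.range m, r i := by
    have : LM p a m g (Function.update ω x true) - LM p a m g (Function.update ω x false) =
        ∑ i ∈ Finset.range m, (-c i * G ω + r i) := by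
      unfold LM
      rw [← Finset.sum_sub_distrib]
      exact Finset.sum_congr rfl he
    rw [Finset.sum_add_distrib, ← Finset.sum_mul, Finset.sum_neg_distrib] at this
    unfold TT
    have hGω : G ω = g (Function.update ω x true) - g (Function.update ω x false) := rfl
    linear_combination δ * this - hGω
  have hs : ∑ i ∈ Finset.range m, c i ≤ m := by
    refine (Finset.sum_le_sum hc1).trans ?_
    simp
  have hs' : δ * ∑ i ∈ Finset.range m, c i ≤ 1 :=
    (mul_le_mul_of_nonneg_left hs hδ).trans hδm
  have h2 : |∑ i ∈ Finset.range m, r i| ≤ (∑ i ∈ Finset.range m, c i) * d + d' := by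
    refine (Finset.abs_sum_le_sum_abs _ _).trans ((Finset.sum_le_sum hr).trans ?_)
    rw [Finset.sum_add_distrib, Finset.sum_mul, Finset.sum_ite_eq']
    split_ifs <;> linarith
  rw [e]
  refine (abs_add_le _ _).trans ?_
  rw [abs_mul, abs_mul, abs_of_nonneg hδ, abs_of_nonneg (by linarith : (0:ℝ) ≤ 1 - _)]
  have h3 := mul_le_mul_of_nonneg_left (hd ω)
    (by linarith : (0:ℝ) ≤ 1 - δ * ∑ i ∈ Finset.range m, c i)
  have h4 := mul_le_mul_of_nonneg_left h2 hδ
  have h5 : |G ω| = |g (Function.update ω x true) - g (Function.update ω x false)| := rfl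
  rw [h5]
  linarith

/-! ### Dependence on finitely many sites -/

lemma DependsOnF.mono {g : Config → ℝ} {S S' : Set ℤ} (h : DependsOnF g S) (hS : S ⊆ S') :
    DependsOnF g S' := fun ω ω' hh => h ω ω' (fun x hx => hh x (hS hx))

lemma DependsOnF.indep {g : Config → ℝ} {S : Set ℤ} (h : DependsOnF g S) {x : ℤ} (hx : x ∉ S) :
    Indep1 x g := by
  intro ω b
  apply h
  intro y hy
  rw [Function.update_of_ne]
  rintro rfl
  exact hx hy

lemma DependsOnF.Av {g : Config → ℝ} {S : Set ℤ} (h : DependsOnF g S) (p : ℝ) (x : ℤ) :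
    DependsOnF (Av p x g) S := by
  intro ω ω' hh
  have : ∀ b, g (Function.update ω x b) = g (Function.update ω' x b) := by
    intro b
    apply h
    intro y hy
    by_cases hyx : y = x
    · subst hyx; simp
    · rw [Function.update_of_ne hyx, Function.update_of_ne hyx, hh y hy]
  simp only [_root_.Av, this]

lemma cc_dep (x : ℤ) {S : Set ℤ} (hx : x + 1 ∈ S) : DependsOnF (cc x) S := by
  intro ω ω' h
  simp only [cc, h _ hx]

lemma LM_dep {g : Config → ℝ} {S : Set ℤ} (h : DependsOnF g S) (p : ℝ) (a : ℤ) (m : ℕ)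
    (hS : ∀ i < m, a + (i : ℕ) + 1 ∈ S) : DependsOnF (LM p a m g) S := by
  intro ω ω' hh
  unfold LM
  refine Finset.sum_congr rfl (fun i hi => ?_)
  rw [cc_dep (a + i) (hS i (Finset.mem_range.1 hi)) ω ω' hh, h.Av p (a + i) ω ω' hh, h ω ω' hh]

lemma TT_dep {g : Config → ℝ} {S : Set ℤ} (h : DependsOnF g S) (p : ℝ) (a : ℤ) (m : ℕ) (δ : ℝ)
    (hS : ∀ i < m, a + (i : ℕ) + 1 ∈ S) : DependsOnF (TT p a m δ g) S := by
  intro ω ω' hh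
  simp only [TT, LM_dep h p a m hS ω ω' hh, h ω ω' hh]

lemma flip_term (p : ℝ) (x : ℤ) (g : Config → ℝ) (ω : Config) :
    (if ω (x + 1) = false then (1 : ℝ) else 0) *
    (if ω x = false then p else 1 - p) * (g (flipAt ω x) - g ω) =
    cc x ω * (Av p x g ω - g ω) := by
  have e : Function.update ω x (ω x) = ω := Function.update_eq_self _ _
  have e2 : flipAt ω x = Function.update ω x (!ω x) := by
    funext y; by_cases h : y = x
    · subst h; simp [flipAt]
    · simp [flipAt, h]
  rw [e2]
  cases hb : ω x with
  | true =>
    rw [hb] at e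
    simp only [cc, Av, e, Bool.not_true, Bool.true_eq_false, if_false]
    ring
  | false =>
    rw [hb] at e
    simp only [cc, Av, e, Bool.not_false, if_true]
    ring

lemma eastGen_eq (p : ℝ) (a : ℤ) (m : ℕ) {g : Config → ℝ}
    (h : DependsOnF g (Set.Ico a (a + m))) : eastGen p g = LM p a m g := by
  funext ω
  unfold eastGen LM
  simp only [flip_term]
  rw [tsum_eq_sum (s := (Finset.range m).map ⟨fun i : ℕ => a + (i : ℤ), fun i j hij => by
    simpa using hij⟩)]
  · rw [Finset.sum_map]; rfl
  · intro x hx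
    have : x ∉ Set.Ico a (a + (m : ℤ)) := by
      intro hx'
      apply hx
      simp only [Finset.mem_map, Finset.mem_range]
      refine ⟨(x - a).toNat, ?_, ?_⟩
      · have := hx'.1; have := hx'.2; omega
      · have := hx'.1; change a + ((x - a).toNat : ℤ) = x; omega
    rw [Av_of_indep p x (h.indep this)]
    ring

lemma cyl_of_Ico {a b : ℤ} {g : Config → ℝ} (h : DependsOnF g (Set.Ico a b)) : IsCylinder g :=
  ⟨Finset.Ico a b, by simpa using h⟩

lemma cont_of_dep {g : Config → ℝ} {S : Finset ℤ} (h : DependsOnF g ↑S) : Continuous g := by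
  classical
  let ext : (S → Bool) → Config := fun σ x => if hx : x ∈ S then σ ⟨x, hx⟩ else true
  have e : g = (fun σ => g (ext σ)) ∘ (fun ω : Config => fun x : S => ω x) := by
    funext ω
    apply h
    intro x hx
    have hx' : x ∈ S := hx
    simp [ext, hx']
  rw [e]
  exact continuous_of_discreteTopology.comp (by fun_prop)

lemma IsCylinder.cont {g : Config → ℝ} (h : IsCylinder g) : Continuous g := by
  obtain ⟨S, hS⟩ := h; exact cont_of_dep hS

lemma bdd_of_cont {g : Config → ℝ} (h : Continuous g) : ∃ B, ∀ ω, |g ω| ≤ B := by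
  obtain ⟨C, hC⟩ := isCompact_univ.exists_bound_of_continuousOn (f := g) h.continuousOn
  exact ⟨C, fun ω => by simpa using hC ω (Set.mem_univ _)⟩

lemma integrable_of_cont {g : Config → ℝ} (h : Continuous g) (ν : Measure Config)
    [IsFiniteMeasure ν] : Integrable g ν := by
  obtain ⟨B, hB⟩ := bdd_of_cont h
  exact Integrable.of_bound h.measurable.aestronglyMeasurable B (ae_of_all _ hB)

/-! ### Integrals against the product measure -/

lemma meas_cyl (S : Finset ℤ) (σ : ℤ → Bool) :
    MeasurableSet {ω : Config | ∀ x ∈ S, ω x = σ x} := by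
  have : {ω : Config | ∀ x ∈ S, ω x = σ x} = ⋂ x ∈ S, {ω : Config | ω x = σ x} := by
    ext; simp
  rw [this]
  refine Finset.measurableSet_biInter S (fun x _ => ?_)
  exact measurableSet_eq_fun (measurable_pi_apply x) measurable_const

lemma int_cyl (E : EastProcess) (S : Finset ℤ) (σ : ℤ → Bool) :
    ∫ ω, ({ω : Config | ∀ x ∈ S, ω x = σ x}.indicator (fun _ => (1 : ℝ))) ω ∂E.μ =
      ∏ x ∈ S, (if σ x then E.p else 1 - E.p) := by
  rw [integral_indicator_const _ (meas_cyl S σ), measureReal_def, E.μprod, ENNReal.toReal_prod]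
  simp only [smul_eq_mul, mul_one]
  refine Finset.prod_congr rfl (fun x _ => ENNReal.toReal_ofReal ?_)
  have := E.hp0; have := E.hp1
  split_ifs <;> linarith

lemma int_Av (E : EastProcess) {g : Config → ℝ} {S : Finset ℤ} (h : DependsOnF g ↑S) (x : ℤ) :
    ∫ ω, Av E.p x g ω ∂E.μ = ∫ ω, g ω ∂E.μ := by
  classical
  have := E.μprob
  by_cases hx : x ∉ S
  · rw [Av_of_indep E.p x (h.indep (by simpa using hx))]
  push Not at hx
  let σ : Finset ℤ → Config := fun U x => decide (x ∈ U)
  let I : Finset ℤ → Config → Config → ℝ := fun S σ =>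
    {ω : Config | ∀ x ∈ S, ω x = σ x}.indicator (fun _ => (1 : ℝ))
  have hI : ∀ S σ, Integrable (I S σ) E.μ := fun S σ =>
    (integrable_const (1 : ℝ)).indicator (meas_cyl S σ)
  have dec : g = fun ω => ∑ U ∈ S.powerset, g (σ U) * I S (σ U) ω := by
    funext ω
    rw [Finset.sum_eq_single (S.filter (fun x => ω x = true))]
    · have e1 : ∀ x ∈ S, ω x = σ (S.filter (fun x => ω x = true)) x := by
        intro x hx; simp [σ, hx]
      have : I S (σ (S.filter (fun x => ω x = true))) ω = 1 :=
        Set.indicator_of_mem (by exact e1) _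
      rw [this, mul_one]
      exact h _ _ e1
    · intro U hU hne
      have : I S (σ U) ω = 0 := by
        apply Set.indicator_of_notMem
        intro hmem
        apply hne
        ext y
        have hU' := Finset.mem_powerset.1 hU
        simp only [Finset.mem_filter]
        constructor
        · intro hy
          refine ⟨hU' hy, ?_⟩
          have := hmem y (hU' hy)
          simpa [σ, hy] using this
        · rintro ⟨hy, hy2⟩
          have := hmem y hy
          rw [hy2] at this
          simpa [σ] using this.symm
      rw [this, mul_zero]
    · intro hn
      exact absurd (Finset.mem_powerset.2 (Finset.filter_subset _ _)) hn
  have decA : Av E.p x g = fun ω => ∑ U ∈ S.powerset, g (σ U) *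
      ((if σ U x then E.p else 1 - E.p) * I (S.erase x) (σ U) ω) := by
    have eI : ∀ U, ∀ ω b, I S (σ U) (Function.update ω x b) =
        if b = σ U x then I (S.erase x) (σ U) ω else 0 := by
      intro U ω b
      have : (∀ y ∈ S, Function.update ω x b y = σ U y) ↔
          (b = σ U x ∧ ∀ y ∈ S.erase x, ω y = σ U y) := by
        constructor
        · intro hh
          refine ⟨by simpa using hh x hx, fun y hy => ?_⟩
          have := hh y (Finset.mem_of_mem_erase hy)
          rwa [Function.update_of_ne (Finset.ne_of_mem_erase hy)] at this
        · rintro ⟨h1, h2⟩ y hy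
          by_cases hyx : y = x
          · subst hyx; simpa using h1
          · rw [Function.update_of_ne hyx]; exact h2 y (Finset.mem_erase.2 ⟨hyx, hy⟩)
      simp only [I, Set.indicator_apply, Set.mem_ofPred_eq, this]
      by_cases hb : b = σ U x <;> simp [hb]
    funext ω
    have dec' : ∀ η, g η = ∑ U ∈ S.powerset, g (σ U) * I S (σ U) η := fun η => congrFun dec η
    rw [Av, dec' (Function.update ω x true), dec' (Function.update ω x false)]
    simp only [eI]
    rw [Finset.mul_sum, Finset.mul_sum, ← Finset.sum_add_distrib]
    refine Finset.sum_congr rfl (fun U _ => ?_)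
    cases σ U x <;> simp <;> ring
  rw [decA]
  conv_rhs => rw [dec]
  rw [integral_finsetSum _ (fun U _ => ((hI _ _).const_mul _).const_mul _),
    integral_finsetSum _ (fun U _ => (hI _ _).const_mul _)]
  refine Finset.sum_congr rfl (fun U _ => ?_)
  rw [integral_const_mul, integral_const_mul, integral_const_mul, int_cyl, int_cyl,
    Finset.mul_prod_erase S (fun x => if σ U x then E.p else 1 - E.p) hx]

lemma int_eq_Ew (E : EastProcess) {g : Config → ℝ} {a : ℤ} {K : ℕ}
    (h : DependsOnF g (Set.Ico a (a + K))) (ω : Config) :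
    ∫ η, g η ∂E.μ = Ew E.p a K g ω := by
  have := E.μprob
  have key : ∀ j : ℕ, (∫ η, Ew E.p a j g η ∂E.μ = ∫ η, g η ∂E.μ) ∧
      DependsOnF (Ew E.p a j g) (Set.Ico a (a + K)) := by
    intro j
    induction j with
    | zero => exact ⟨rfl, h⟩
    | succ j ih =>
      refine ⟨?_, ih.2.Av _ _⟩
      have : DependsOnF (Ew E.p a j g) ↑(Finset.Ico a (a + (K : ℤ))) := by simpa using ih.2
      simp only [Ew]
      rw [int_Av E this, ih.1]
  rw [← (key K).1]
  have : ∀ η, Ew E.p a K g η = Ew E.p a K g ω := fun η => Ew_dep E.p a K h η ω (fun x hx hx' =>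
    absurd hx hx')
  simp [this]

/-! ### The gap inequality in a block with a zero on its right -/

lemma block_neg {p : ℝ} (h0 : 0 ≤ p) (h1 : p ≤ 1) (a : ℤ) (K i : ℕ) (hi : i < K)
    (G : Config → ℝ) {c : Config → ℝ} (hc : Indep1 (a + i) c) (hc0 : ∀ ω, 0 ≤ c ω) (ω : Config) :
    Ew p a K (fun η => G η * (c η * (Av p (a + i) G η - G η))) ω ≤ 0 := by
  rw [← Ew_Av_mem p a K i hi]
  have e : Av p (a + i) (fun η => G η * (c η * (Av p (a + i) G η - G η))) =
      fun η => c η * ((Av p (a + i) G η) ^ 2 - Av p (a + i) (fun η => G η ^ 2) η) := by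
    funext η
    simp only [Av, hc η, Function.update_idem]
    ring
  rw [e]
  calc _ ≤ Ew p a K (fun _ => 0) ω := by
        apply Ew_mono h0 h1
        intro η
        exact mul_nonpos_of_nonneg_of_nonpos (hc0 η) (by linarith [Av_sq h0 h1 (a + i) G η])
    _ = 0 := by rw [Ew_const]

lemma gap_le (E : EastProcess) (hgap : 0 < gap E) {a : ℤ} {K : ℕ} {G : Config → ℝ}
    (h : DependsOnF G (Set.Ico a (a + K))) (hvar : 0 < variance G E.μ) :
    gap E * variance G E.μ ≤ -∫ ω, G ω * LM E.p a K G ω ∂E.μ := by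
  have hb : BddBelow (gapSet E) := by
    by_contra hn
    have : gap E = 0 := Real.sInf_of_not_bddBelow hn
    linarith
  have : gap E ≤ (-∫ ω, G ω * eastGen E.p G ω ∂E.μ) / variance G E.μ :=
    csInf_le hb ⟨G, cyl_of_Ico h, hvar, rfl⟩
  rw [le_div_iff₀ hvar, eastGen_eq E.p a K h] at this
  exact this

lemma block_gap (E : EastProcess) (hgap : 0 < gap E) (a : ℤ) (K : ℕ) (F : Config → ℝ)
    (ω : Config) (hω : ω (a + K) = false) (hmean : Ew E.p a K F ω = 0) :
    ∑ i ∈ Finset.range K, Ew E.p a K (fun η => F η * (cc (a + (i : ℕ)) η *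
      (Av E.p (a + (i : ℕ)) F η - F η))) ω ≤ -gap E * Ew E.p a K (fun η => F η ^ 2) ω := by
  classical
  have := E.μprob
  have h0 := E.hp0.le
  have h1 := E.hp1.le
  set p := E.p
  let mix : Config → Config := fun η x => if x ∈ Set.Ico a (a + (K : ℤ)) then η x else ω x
  set G : Config → ℝ := fun η => F (mix η) with hGdef
  have hG : DependsOnF G (Set.Ico a (a + (K : ℤ))) := by
    intro η η' hh
    have : mix η = mix η' := by
      funext x
      simp only [mix]
      split_ifs with hx
      · exact hh x hx
      · rfl
    simp only [hGdef, this]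
  have hGF : ∀ η : Config, (∀ x, x ∉ Set.Ico a (a + (K : ℤ)) → η x = ω x) → G η = F η := by
    intro η hη
    have : mix η = η := by
      funext x
      simp only [mix]
      split_ifs with hx
      · rfl
      · exact (hη x hx).symm
    simp only [hGdef, this]
  have hup : ∀ i < K, ∀ η : Config, (∀ x, x ∉ Set.Ico a (a + (K : ℤ)) → η x = ω x) → ∀ b,
      ∀ x, x ∉ Set.Ico a (a + (K : ℤ)) → Function.update η (a + (i : ℕ)) b x = ω x := by
    intro i hi η hη b x hx
    rw [Function.update_of_ne, hη x hx]
    rintro rfl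
    apply hx
    simp only [Set.mem_Ico]
    omega
  have eterm : ∀ i ∈ Finset.range K, Ew p a K (fun η => F η * (cc (a + (i : ℕ)) η *
      (Av p (a + (i : ℕ)) F η - F η))) ω = Ew p a K (fun η => G η * (cc (a + (i : ℕ)) η *
      (Av p (a + (i : ℕ)) G η - G η))) ω := by
    intro i hi
    apply Ew_congr
    intro η hη
    have hu := hup i (Finset.mem_range.1 hi) η hη
    simp only [Av, hGF η hη, hGF _ (hu true), hGF _ (hu false)]
  rw [Finset.sum_congr rfl eterm]
  have e2 : Ew p a K (fun η => F η ^ 2) ω = Ew p a K (fun η => G η ^ 2) ω := by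
    apply Ew_congr
    intro η hη
    rw [hGF η hη]
  have hG2 : DependsOnF (fun η => G η ^ 2) (Set.Ico a (a + (K : ℤ))) := by
    intro η η' hh; simp only [hG η η' hh]
  have e3 : Ew p a K F ω = Ew p a K G ω :=
    Ew_congr p a K ω (fun η hη => (hGF η hη).symm)
  have hm0 : ∫ η, G η ∂E.μ = 0 := by rw [int_eq_Ew E hG ω, ← e3, hmean]
  have hvar : variance G E.μ = Ew p a K (fun η => F η ^ 2) ω := by
    rw [variance_of_integral_eq_zero (cyl_of_Ico hG).cont.measurable.aemeasurable hm0, e2]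
    exact int_eq_Ew E hG2 ω
  have hneg : ∀ i < K, ∀ ω, Ew p a K (fun η => G η * (cc (a + (i : ℕ)) η *
      (Av p (a + (i : ℕ)) G η - G η))) ω ≤ 0 := fun i hi ω =>
    block_neg h0 h1 a K i hi G (cc_indep (by omega)) (cc_nonneg _) ω
  rcases (variance_nonneg G E.μ).eq_or_lt with hv | hv
  · rw [← hvar, ← hv, mul_zero]
    exact Finset.sum_nonpos (fun i hi => hneg i (Finset.mem_range.1 hi) ω)
  have hgl := gap_le E hgap hG hv
  rw [← hvar]
  suffices hs : ∑ i ∈ Finset.range K, Ew p a K (fun η => G η * (cc (a + (i : ℕ)) η *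
      (Av p (a + (i : ℕ)) G η - G η))) ω ≤ ∫ ω, G ω * LM p a K G ω ∂E.μ by
    linarith
  have hGL : DependsOnF (fun η => G η * LM p a K G η) (Set.Ico a (a + (K + 1 : ℕ))) := by
    have hG' : DependsOnF G (Set.Ico a (a + (K + 1 : ℕ))) := hG.mono (by
      apply Set.Ico_subset_Ico_right; push_cast; omega)
    intro η η' hh
    have h3 := LM_dep hG' p a K (by intro i hi; simp only [Set.mem_Ico]; push_cast; omega) η η' hh
    simp only [hG' η η' hh, h3]
  rw [int_eq_Ew E hGL ω]
  have e4 : (fun η => G η * LM p a K G η) = fun η => ∑ i ∈ Finset.range K,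
      G η * (cc (a + (i : ℕ)) η * (Av p (a + (i : ℕ)) G η - G η)) := by
    funext η; rw [LM, Finset.mul_sum]
  rw [e4, Ew_sum]
  refine Finset.sum_le_sum (fun i hi => ?_)
  have hi' := Finset.mem_range.1 hi
  simp only [Ew]
  have eω : Function.update ω (a + (K : ℤ)) false = ω := by
    rw [← hω]; exact Function.update_eq_self _ _
  change _ ≤ Av p (a + K) _ ω
  rw [Av, eω]
  set X := Ew p a K (fun η => G η * (cc (a + (i : ℕ)) η * (Av p (a + (i : ℕ)) G η - G η)))
    with hX
  suffices X ω ≤ X (Function.update ω (a + K) true) by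
    have := mul_le_mul_of_nonneg_left this h0
    linarith
  by_cases hiK : i + 1 = K
  · have hz : X (Function.update ω (a + K) true) = 0 := by
      have := Ew_congr p a K (g := fun η => G η * (cc (a + (i : ℕ)) η *
        (Av p (a + (i : ℕ)) G η - G η))) (h := fun _ => 0) (Function.update ω (a + K) true) (by
          intro η hη
          have : η (a + i + 1) = true := by
            rw [hη _ (by simp only [Set.mem_Ico]; omega)]
            have : a + (i : ℤ) + 1 = a + K := by omega
            rw [this]; simp
          simp [cc, this])
      rw [hX, this, Ew_const]
    rw [hz]
    exact hneg i hi' ω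
  · apply le_of_eq
    rw [hX]
    have hd : DependsOnF (fun η => G η * (cc (a + (i : ℕ)) η *
        (Av p (a + (i : ℕ)) G η - G η))) (Set.Ico a (a + (K : ℤ))) := by
      intro η η' hh
      have := cc_dep (a + i) (S := Set.Ico a (a + (K : ℤ)))
        (by simp only [Set.mem_Ico]; omega) η η' hh
      simp only [hG η η' hh, this, hG.Av p (a + i) η η' hh]
    exact Ew_dep p a K hd _ _ (fun x hx hx' => absurd hx hx')

/-! ### One Euler step: mean and variance -/

lemma mean_step (p : ℝ) (a : ℤ) (m : ℕ) (δ : ℝ) (K : ℕ) {F : Config → ℝ}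
    (h : ∀ ω, Ew p a K F ω = 0) (ω : Config) : Ew p a K (TT p a m δ F) ω = 0 := by
  have e : TT p a m δ F = fun ω => F ω + ∑ i ∈ Finset.range m,
      δ * (cc (a + i) ω * (Av p (a + i) F ω + (-1) * F ω)) := by
    funext ω
    rw [TT, LM, Finset.mul_sum]
    congr 1
    refine Finset.sum_congr rfl (fun i _ => ?_)
    ring
  rw [e, Ew_add, Ew_sum]
  simp only [h, zero_add]
  refine Finset.sum_eq_zero (fun i _ => ?_)
  rw [Ew_smul]
  simp only
  have hz : Ew p a K (fun ω => cc (a + i) ω * (Av p (a + i) F ω + -1 * F ω)) ω = 0 := by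
    by_cases hi : i < K
    · rw [← Ew_Av_mem p a K i hi, Av_mul p (a + i) (cc_indep (by omega)), Av_add, Av_idem, Av_smul]
      have : (fun ω => cc (a + i) ω * (Av p (a + i) F ω + -1 * Av p (a + i) F ω)) =
          fun _ => 0 := by funext ω; ring
      rw [this, Ew_const]
    · rw [Ew_mul p a K (fun j hj => cc_indep (by omega)), Ew_add, Ew_smul, Ew_Av]
      have h' : Ew p a K F = fun _ => 0 := funext h
      simp only [h', Av_const]
      ring
  rw [hz, mul_zero]

lemma right_term {p : ℝ} (h0 : 0 ≤ p) (h1 : p ≤ 1) (a : ℤ) (n m K i : ℕ) {F : Config → ℝ} {β : ℝ}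
    (hV : ∀ K, n ≤ K → K ≤ m → ∀ ω : Config, ω (a + (K : ℕ)) = false →
      Ew p a K (fun η => F η ^ 2) ω ≤ β)
    (hnK : n ≤ K) (hKm : K ≤ m) (hKi : K ≤ i) (him : i < m)
    (ω : Config) (hω : ω (a + (K : ℕ)) = false) :
    2 * Ew p a K (fun η => F η * (cc (a + (i : ℕ)) η * (Av p (a + (i : ℕ)) F η - F η))) ω ≤
      cc (a + (i : ℕ)) ω * (β - Ew p a K (fun η => F η ^ 2) ω) := by
  have e1 : 2 * Ew p a K (fun η => F η * (cc (a + (i : ℕ)) η *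
      (Av p (a + (i : ℕ)) F η - F η))) ω = Ew p a K (fun η => 2 * (F η * (cc (a + (i : ℕ)) η *
      (Av p (a + (i : ℕ)) F η - F η)))) ω := by
    rw [Ew_smul]
  rw [e1]
  calc _ ≤ Ew p a K (fun η => cc (a + (i : ℕ)) η * (Av p (a + (i : ℕ)) (fun η => F η ^ 2) η +
        (-1) * F η ^ 2)) ω := by
        apply Ew_mono h0 h1
        intro η
        have h2 := Av_sq h0 h1 (a + i) F η
        have h3 : 2 * (F η * (Av p (a + (i : ℕ)) F η - F η)) ≤
          Av p (a + (i : ℕ)) (fun η => F η ^ 2) η + (-1) * F η ^ 2 := by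
          nlinarith [sq_nonneg (F η - Av p (a + (i : ℕ)) F η)]
        have := mul_le_mul_of_nonneg_left h3 (cc_nonneg (a + i) η)
        linarith
    _ = cc (a + (i : ℕ)) ω * (Av p (a + i) (Ew p a K (fun η => F η ^ 2)) ω -
          Ew p a K (fun η => F η ^ 2) ω) := by
        rw [Ew_mul p a K (fun j hj => cc_indep (by omega)), Ew_add, Ew_Av,
          Ew_smul p a K (-1) (fun η => F η ^ 2)]
        ring
    _ ≤ _ := by
        by_cases hc : ω (a + i + 1) = false
        · apply mul_le_mul_of_nonneg_left _ (cc_nonneg _ _)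
          apply sub_le_sub_right
          rcases hKi.eq_or_lt with rfl | hlt
          · exact hV (K + 1) (by omega) (by omega) ω (by push_cast; rw [← add_assoc]; exact hc)
          · have hb : ∀ b, Ew p a K (fun η => F η ^ 2) (Function.update ω (a + i) b) ≤ β := by
              intro b
              apply hV K hnK hKm
              rw [Function.update_of_ne (by omega), hω]
            have t1 := mul_le_mul_of_nonneg_left (hb true) h0
            have t2 := mul_le_mul_of_nonneg_left (hb false) (sub_nonneg.2 h1)
            unfold Av
            linarith
        · simp [cc, hc]

lemma var_step (E : EastProcess) (hgap : 0 < gap E) (a : ℤ) (n m : ℕ) {δ : ℝ} (hδ : 0 ≤ δ)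
    (hδ1 : 2 * δ * gap E + δ * m ≤ 1) {F : Config → ℝ} {B β : ℝ}
    (hB : ∀ ω, |F ω| ≤ B)
    (hmean : ∀ K, n ≤ K → ∀ ω, Ew E.p a K F ω = 0)
    (hV : ∀ K, n ≤ K → K ≤ m → ∀ ω : Config, ω (a + (K : ℕ)) = false →
      Ew E.p a K (fun η => F η ^ 2) ω ≤ β)
    (K : ℕ) (hnK : n ≤ K) (hKm : K ≤ m) (ω : Config) (hω : ω (a + (K : ℕ)) = false) :
    Ew E.p a K (fun η => (TT E.p a m δ F η) ^ 2) ω ≤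
      (1 - 2 * δ * gap E) * β + δ ^ 2 * (2 * m * B) ^ 2 := by
  have h0 := E.hp0.le
  have h1 := E.hp1.le
  set p := E.p with hp
  set v := Ew p a K (fun η => F η ^ 2) ω with hv
  have hvβ : v ≤ β := hV K hnK hKm ω hω
  have e : (fun η => (TT p a m δ F η) ^ 2) = fun η => (F η ^ 2 + (2 * δ) * ∑ i ∈ Finset.range m,
      F η * (cc (a + (i : ℕ)) η * (Av p (a + (i : ℕ)) F η - F η))) +
      δ ^ 2 * (LM p a m F η) ^ 2 := by
    funext η
    have : LM p a m F η * F η = ∑ i ∈ Finset.range m,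
      F η * (cc (a + (i : ℕ)) η * (Av p (a + (i : ℕ)) F η - F η)) := by
      rw [LM, Finset.sum_mul]
      refine Finset.sum_congr rfl (fun i _ => ?_)
      ring
    rw [← this, TT]; ring
  rw [e, Ew_add, Ew_add, Ew_smul, Ew_smul, Ew_sum]
  simp only
  have hL : Ew p a K (fun η => (LM p a m F η) ^ 2) ω ≤ (2 * m * B) ^ 2 := by
    calc _ ≤ Ew p a K (fun _ => (2 * m * B) ^ 2) ω := by
          apply Ew_mono h0 h1
          intro η
          have := LM_abs_le h0 h1 a m hB η
          exact sq_le_sq' (by linarith [(abs_le.1 this).1]) (abs_le.1 this).2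
      _ = _ := by rw [Ew_const]
  have hsplit : ∑ i ∈ Finset.range m, Ew p a K (fun η => F η * (cc (a + (i : ℕ)) η *
      (Av p (a + (i : ℕ)) F η - F η))) ω =
      ∑ i ∈ Finset.range K, Ew p a K (fun η => F η * (cc (a + (i : ℕ)) η *
      (Av p (a + (i : ℕ)) F η - F η))) ω +
      ∑ i ∈ Finset.Ico K m, Ew p a K (fun η => F η * (cc (a + (i : ℕ)) η *
      (Av p (a + (i : ℕ)) F η - F η))) ω := (Finset.sum_range_add_sum_Ico _ hKm).symm
  rw [hsplit]
  have hleft := block_gap E hgap a K F ω hω (hmean K hnK ω)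
  have hright : 2 * ∑ i ∈ Finset.Ico K m, Ew p a K (fun η => F η * (cc (a + (i : ℕ)) η *
      (Av p (a + (i : ℕ)) F η - F η))) ω ≤ m * (β - v) := by
    rw [Finset.mul_sum]
    calc _ ≤ ∑ i ∈ Finset.Ico K m, (β - v) := by
          refine Finset.sum_le_sum (fun i hi => ?_)
          have hi' := Finset.mem_Ico.1 hi
          refine (right_term h0 h1 a n m K i hV hnK hKm hi'.1 hi'.2 ω hω).trans ?_
          calc _ ≤ 1 * (β - v) :=
                mul_le_mul_of_nonneg_right (cc_le_one _ _) (by linarith)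
            _ = _ := one_mul _
      _ = (m - K : ℕ) * (β - v) := by simp; ring
      _ ≤ _ := by
          apply mul_le_mul_of_nonneg_right _ (by linarith)
          exact_mod_cast Nat.sub_le m K
  rw [← hp, ← hv] at hleft
  have t1 := mul_le_mul_of_nonneg_left hleft (by linarith : 0 ≤ 2 * δ)
  have t2 := mul_le_mul_of_nonneg_left hright hδ
  have t3 := mul_le_mul_of_nonneg_left hL (sq_nonneg δ)
  have t4 := mul_le_mul_of_nonneg_left hvβ (by linarith : 0 ≤ 1 - (2 * δ * gap E + δ * m))
  linarith

/-! ### Iterated Euler steps -/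

/-- iterates -/
def FF (p : ℝ) (a : ℤ) (m : ℕ) (δ : ℝ) (f : Config → ℝ) : ℕ → Config → ℝ
  | 0 => f
  | j + 1 => TT p a m δ (FF p a m δ f j)

lemma FF_abs_le {p : ℝ} (h0 : 0 ≤ p) (h1 : p ≤ 1) (a : ℤ) (m : ℕ) {δ : ℝ} (hδ : 0 ≤ δ)
    (hδm : δ * m ≤ 1) {f : Config → ℝ} {B : ℝ}
    (hf : ∀ ω, |f ω| ≤ B) (j : ℕ) (ω : Config) : |FF p a m δ f j ω| ≤ B := by
  induction j generalizing ω with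
  | zero => exact hf ω
  | succ j ih => exact TT_abs_le h0 h1 a m hδ hδm ih ω

lemma FF_dep {p : ℝ} (a : ℤ) (m : ℕ) {δ : ℝ} {f : Config → ℝ}
    (hf : DependsOnF f (Set.Ico a (a + (m + 1 : ℕ)))) (j : ℕ) :
    DependsOnF (FF p a m δ f j) (Set.Ico a (a + (m + 1 : ℕ))) := by
  induction j with
  | zero => exact hf
  | succ j ih =>
    exact TT_dep ih p a m δ (by intro i hi; simp only [Set.mem_Ico]; push_cast; omega)

lemma FF_grad {p : ℝ} (h0 : 0 ≤ p) (h1 : p ≤ 1) (a : ℤ) (n m : ℕ) {δ : ℝ} (hδ : 0 ≤ δ)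
    (hδm : δ * m ≤ 1) {f : Config → ℝ} {B : ℝ}
    (hf : ∀ ω, |f ω| ≤ B) (hdep : DependsOnF f (Set.Ico a (a + (n + 1 : ℕ)))) (j r : ℕ)
    (ω : Config) :
    |FF p a m δ f j (Function.update ω (a + (n + r : ℕ)) true) -
      FF p a m δ f j (Function.update ω (a + (n + r : ℕ)) false)| ≤
      2 * B * (j.choose r * δ ^ r) := by
  induction j generalizing r ω with
  | zero =>
    cases r with
    | zero =>
      simp only [Nat.choose_self, pow_zero, Nat.cast_one, mul_one]
      refine (abs_sub _ _).trans ?_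
      have := hf (Function.update ω (a + (n + 0 : ℕ)) true)
      have := hf (Function.update ω (a + (n + 0 : ℕ)) false)
      simp only [FF]
      linarith
    | succ r =>
      have hi : Indep1 (a + (n + (r + 1) : ℕ)) f := hdep.indep (by
        simp only [Set.mem_Ico]; push_cast; omega)
      simp only [FF, hi ω]
      simp
  | succ j ih =>
    cases r with
    | zero =>
      simp only [Nat.choose_zero_right, pow_zero, Nat.cast_one, mul_one]
      refine (abs_sub _ _).trans ?_
      have := FF_abs_le h0 h1 a m hδ hδm hf (j + 1) (Function.update ω (a + (n + 0 : ℕ)) true)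
      have := FF_abs_le h0 h1 a m hδ hδm hf (j + 1) (Function.update ω (a + (n + 0 : ℕ)) false)
      linarith
    | succ r =>
      have := TT_grad h0 h1 a m hδ hδm (g := FF p a m δ f j) (n + r) (ih (r + 1)) (ih r) ω
      refine this.trans (le_of_eq ?_)
      rw [Nat.choose_succ_succ]
      push_cast
      ring

lemma FF_mean (p : ℝ) (a : ℤ) (m : ℕ) (δ : ℝ) (K : ℕ) {f : Config → ℝ}
    (h : ∀ ω, Ew p a K f ω = 0) (j : ℕ) (ω : Config) : Ew p a K (FF p a m δ f j) ω = 0 := by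
  induction j generalizing ω with
  | zero => exact h ω
  | succ j ih => exact mean_step p a m δ K ih ω

lemma Ew_of_dep (p : ℝ) (a : ℤ) (n K : ℕ) (hn : n ≤ K) {f : Config → ℝ}
    (hdep : DependsOnF f (Set.Ico a (a + n))) : Ew p a K f = Ew p a n f := by
  induction K, hn using Nat.le_induction with
  | base => rfl
  | succ K hK ih =>
    simp only [Ew]
    rw [ih]
    rw [← Ew_Av, Av_of_indep p _ (hdep.indep (by simp only [Set.mem_Ico]; omega))]

lemma FF_var (E : EastProcess) (hgap : 0 < gap E) (a : ℤ) (n m : ℕ) {δ : ℝ} (hδ : 0 ≤ δ)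
    (hδ1 : 2 * δ * gap E + δ * m ≤ 1) {f : Config → ℝ} {B : ℝ}
    (hf : ∀ ω, |f ω| ≤ B) (hdep : DependsOnF f (Set.Ico a (a + n)))
    (hmean : ∫ ω, f ω ∂E.μ = 0) (j : ℕ) :
    ∀ K, n ≤ K → K ≤ m → ∀ ω : Config, ω (a + (K : ℕ)) = false →
    Ew E.p a K (fun η => (FF E.p a m δ f j η) ^ 2) ω ≤
      (1 - 2 * δ * gap E) ^ j * variance f E.μ + j * (δ ^ 2 * (2 * m * B) ^ 2) := by
  have hδm : δ * m ≤ 1 := by nlinarith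
  have hq : 0 ≤ δ * gap E := mul_nonneg hδ hgap.le
  have hm : 0 ≤ δ * m := mul_nonneg hδ (Nat.cast_nonneg m)
  induction j with
  | zero =>
    intro K hK _ ω _
    have hd2 : DependsOnF (fun η => f η ^ 2) (Set.Ico a (a + (n : ℤ))) := by
      intro η η' hh; simp only [hdep η η' hh]
    simp only [FF]
    rw [Ew_of_dep E.p a n K hK hd2, ← int_eq_Ew E hd2 ω]
    rw [variance_of_integral_eq_zero (cyl_of_Ico hdep).cont.measurable.aemeasurable hmean]
    simp
  | succ j ih =>
    intro K hK hKm ω hω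
    have hmn : ∀ K, n ≤ K → ∀ ω, Ew E.p a K (FF E.p a m δ f j) ω = 0 := by
      intro K hK
      apply FF_mean
      intro ω
      rw [Ew_of_dep E.p a n K hK hdep, ← int_eq_Ew E hdep ω, hmean]
    refine (var_step E hgap a n m hδ hδ1
      (FF_abs_le E.hp0.le E.hp1.le a m hδ hδm hf j) hmn ih K hK hKm ω hω).trans ?_
    have hC : 0 ≤ j * (δ ^ 2 * (2 * m * B) ^ 2) := by positivity
    have : (1 - 2 * δ * gap E) * (j * (δ ^ 2 * (2 * m * B) ^ 2)) ≤
        1 * (j * (δ ^ 2 * (2 * m * B) ^ 2)) :=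
      mul_le_mul_of_nonneg_right (by linarith) hC
    rw [pow_succ (1 - 2 * δ * gap E) j]
    push_cast
    linarith

/-! ### The semigroup on continuous functions -/

/-- the semigroup -/
def Pf (E : EastProcess) (t : ℝ) (g : Config → ℝ) (ω : Config) : ℝ := ∫ η, g η ∂(E.P t ω)

lemma Pf_abs_le (E : EastProcess) (t : ℝ) {g : Config → ℝ} {B : ℝ} (hB : ∀ ω, |g ω| ≤ B)
    (ω : Config) : |Pf E t g ω| ≤ B := by
  have := E.markov t
  have h := norm_integral_le_of_norm_le_const (μ := E.P t ω) (f := g) (C := B) (ae_of_all _ hB)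
  simpa [Pf] using h

lemma Pf_sub (E : EastProcess) (t : ℝ) {g h : Config → ℝ} (hg : Continuous g) (hh : Continuous h)
    (ω : Config) : Pf E t (fun η => g η - h η) ω = Pf E t g ω - Pf E t h ω := by
  have := E.markov t
  exact integral_sub (integrable_of_cont hg _) (integrable_of_cont hh _)

lemma Pf_zero (E : EastProcess) {g : Config → ℝ} (ω : Config) :
    Pf E 0 g ω = g ω := by
  simp [Pf, E.P0, Kernel.id_apply]

lemma Pf_semi (E : EastProcess) {s t : ℝ} (hs : 0 ≤ s) (ht : 0 ≤ t) {g : Config → ℝ}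
    (hg : Continuous g) (ω : Config) : Pf E (t + s) g ω = Pf E t (Pf E s g) ω := by
  have := E.markov t
  have := E.markov s
  unfold Pf
  rw [E.semigroup s t hs ht]
  exact Kernel.integral_comp (integrable_of_cont hg _)

lemma Pf_cont (E : EastProcess) {t : ℝ} (ht : 0 ≤ t) {g : Config → ℝ} (hg : Continuous g) :
    Continuous (Pf E t g) := E.feller t ht g hg

/-- the resolvent at `λ = 1` -/
def Res (E : EastProcess) (φ : Config → ℝ) (ω : Config) : ℝ :=
  ∫ s in Set.Ioi (0 : ℝ), Real.exp (-s) * Pf E s φ ω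

lemma Res_integrable (E : EastProcess) {φ : Config → ℝ} (hφ : Continuous φ) (ω : Config) (c : ℝ) :
    IntegrableOn (fun s => Real.exp (-s) * Pf E s φ ω) (Set.Ioi c) := by
  obtain ⟨B, hB⟩ := bdd_of_cont hφ
  refine Integrable.mono' ((integrableOn_exp_neg_Ioi c).mul_const B) ?_ (ae_of_all _ fun s => ?_)
  · exact (Continuous.mul (by fun_prop) (E.timeCont φ hφ ω)).aestronglyMeasurable
  · rw [norm_mul, Real.norm_eq_abs, Real.norm_eq_abs, abs_of_pos (Real.exp_pos _)]
    exact mul_le_mul_of_nonneg_left (Pf_abs_le E s hB ω) (Real.exp_pos _).le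

lemma Res_cont (E : EastProcess) {φ : Config → ℝ} (hφ : Continuous φ) :
    Continuous (Res E φ) := by
  obtain ⟨B, hB⟩ := bdd_of_cont hφ
  unfold Res
  refine continuous_of_dominated (F := fun ω s => Real.exp (-s) * Pf E s φ ω)
    (bound := fun s => Real.exp (-s) * B) (fun ω => (Res_integrable E hφ ω 0).1)
    (fun ω => ae_of_all _ fun s => ?_) ((integrableOn_exp_neg_Ioi 0).mul_const B) ?_
  · rw [norm_mul, Real.norm_eq_abs, Real.norm_eq_abs, abs_of_pos (Real.exp_pos _)]
    exact mul_le_mul_of_nonneg_left (Pf_abs_le E s hB ω) (Real.exp_pos _).le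
  · rw [ae_restrict_iff' measurableSet_Ioi]
    refine ae_of_all _ fun s hs => ?_
    exact (Pf_cont E (le_of_lt hs) hφ).const_mul _

lemma Res_semi (E : EastProcess) {φ : Config → ℝ} (hφ : Continuous φ) {h : ℝ} (hh : 0 ≤ h)
    (ω : Config) : Pf E h (Res E φ) ω =
      Real.exp h * (Res E φ ω - ∫ r in (0 : ℝ)..h, Real.exp (-r) * Pf E r φ ω) := by
  have := E.markov h
  obtain ⟨B, hB⟩ := bdd_of_cont hφ
  have h1 : Pf E h (Res E φ) ω =
      ∫ s in Set.Ioi (0 : ℝ), ∫ η, Real.exp (-s) * Pf E s φ η ∂(E.P h ω) := by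
    have hm : StronglyMeasurable (Function.uncurry fun (s : ℝ) (η : Config) =>
        Real.exp (-s) * Pf E (max s 0) φ η) := by
      apply stronglyMeasurable_uncurry_of_continuous_of_stronglyMeasurable
      · intro η
        exact Continuous.mul (by fun_prop)
          ((E.timeCont φ hφ η).comp (continuous_id.max continuous_const))
      · intro s
        exact ((Pf_cont E (le_max_right s 0) hφ).const_mul _).stronglyMeasurable
    have hi : Integrable (Function.uncurry fun (s : ℝ) (η : Config) =>
        Real.exp (-s) * Pf E (max s 0) φ η)
        ((volume.restrict (Set.Ioi (0 : ℝ))).prod (E.P h ω)) := by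
      have hb : Integrable (fun z : ℝ × Config => Real.exp (-z.1) * B)
          ((volume.restrict (Set.Ioi (0 : ℝ))).prod (E.P h ω)) :=
        Integrable.mul_prod (f := fun s : ℝ => Real.exp (-s)) (g := fun _ : Config => B)
          (integrableOn_exp_neg_Ioi 0) (integrable_const B)
      refine hb.mono' hm.aestronglyMeasurable (ae_of_all _ fun z => ?_)
      simp only [Function.uncurry]
      rw [norm_mul, Real.norm_eq_abs, Real.norm_eq_abs, abs_of_pos (Real.exp_pos _)]
      exact mul_le_mul_of_nonneg_left (Pf_abs_le E _ hB _) (Real.exp_pos _).le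
    have hsw := integral_integral_swap hi
    have el : ∀ η, ∫ s in Set.Ioi (0 : ℝ), Real.exp (-s) * Pf E (max s 0) φ η = Res E φ η := by
      intro η
      refine setIntegral_congr_fun measurableSet_Ioi (fun s hs => ?_)
      have hs' : (0 : ℝ) ≤ s := le_of_lt hs
      simp only [max_eq_left hs']
    simp only [el] at hsw
    unfold Pf at hsw ⊢
    rw [← hsw]
    refine setIntegral_congr_fun measurableSet_Ioi (fun s hs => ?_)
    have hs' : (0 : ℝ) ≤ s := le_of_lt hs
    simp only [max_eq_left hs']
  have h2 : Pf E h (Res E φ) ω =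
      ∫ s in Set.Ioi (0 : ℝ), Real.exp h * (Real.exp (-(s + h)) * Pf E (s + h) φ ω) := by
    rw [h1]
    refine setIntegral_congr_fun measurableSet_Ioi (fun s hs => ?_)
    have hs' : (0 : ℝ) ≤ s := le_of_lt hs
    rw [integral_const_mul]
    have e := Pf_semi E hs' hh hφ ω
    have e' : ∫ η, Pf E s φ η ∂(E.P h ω) = Pf E h (Pf E s φ) ω := rfl
    rw [e', ← e, ← mul_assoc, ← Real.exp_add, add_comm h s]
    congr 2
    ring
  rw [h2, integral_const_mul]
  have h3 : ∫ s in Set.Ioi (0 : ℝ), Real.exp (-(s + h)) * Pf E (s + h) φ ω =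
      ∫ r in Set.Ioi h, Real.exp (-r) * Pf E r φ ω := by
    have := (measurePreserving_add_right (volume : Measure ℝ) h).setIntegral_preimage_emb
      (measurableEmbedding_addRight h) (fun r => Real.exp (-r) * Pf E r φ ω) (Set.Ioi h)
    rw [← this]
    congr 2
    ext s
    simp
  rw [h3]
  have h4 := intervalIntegral.integral_interval_add_Ioi (Res_integrable E hφ ω 0)
    (Res_integrable E hφ ω h)
  have h5 : Res E φ ω = ∫ s in Set.Ioi (0 : ℝ), Real.exp (-s) * Pf E s φ ω := rfl
  rw [h5, ← h4]
  ring

lemma Res_deriv (E : EastProcess) {φ : Config → ℝ} (hφ : Continuous φ) (c : ℝ) (h : ℝ)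
    (ω : Config) : HasDerivAt (fun h => Real.exp h * (c - ∫ r in (0 : ℝ)..h,
      Real.exp (-r) * Pf E r φ ω))
      (Real.exp h * (c - ∫ r in (0 : ℝ)..h, Real.exp (-r) * Pf E r φ ω) - Pf E h φ ω) h := by
  have hc : Continuous fun r => Real.exp (-r) * Pf E r φ ω :=
    Continuous.mul (by fun_prop) (E.timeCont φ hφ ω)
  have h1 : HasDerivAt (fun h => ∫ r in (0 : ℝ)..h, Real.exp (-r) * Pf E r φ ω)
      (Real.exp (-h) * Pf E h φ ω) h := hc.integral_hasStrictDerivAt 0 h |>.hasDerivAt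
  have h2 := (Real.hasDerivAt_exp h).mul (h1.const_sub c)
  refine h2.congr_deriv ?_
  have : Real.exp h * Real.exp (-h) = 1 := by rw [← Real.exp_add]; simp
  linear_combination (-(Pf E h φ ω)) * this

/-- positive maximum principle -/
lemma max_principle (E : EastProcess) {w : Config → ℝ} (hw : Continuous w)
    (hd : ∀ ω, HasDerivWithinAt (fun h => Pf E h w ω) (w ω) (Set.Ici 0) 0) (ω : Config) :
    w ω ≤ 0 := by
  obtain ⟨ω₀, -, hmax⟩ := isCompact_univ.exists_isMaxOn (Set.univ_nonempty (α := Config))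
    hw.continuousOn
  have hle : ∀ η, w η ≤ w ω₀ := fun η => hmax (Set.mem_univ η)
  refine (hle ω).trans ?_
  have ht := (hasDerivWithinAt_iff_tendsto_slope.1 (hd ω₀))
  have hset : Set.Ici (0 : ℝ) \ {0} = Set.Ioi 0 := by
    ext x; simp only [Set.mem_sdiff, Set.mem_Ici, Set.mem_singleton_iff, Set.mem_Ioi]
    constructor
    · rintro ⟨a, b⟩; exact lt_of_le_of_ne a (Ne.symm b)
    · intro h; exact ⟨h.le, h.ne'⟩
  rw [hset] at ht
  refine le_of_tendsto ht ?_
  filter_upwards [self_mem_nhdsWithin] with h hh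
  have hh' : 0 < h := hh
  rw [slope_def_field]
  apply div_nonpos_of_nonpos_of_nonneg _ (by linarith)
  rw [Pf_zero]
  have := E.markov h
  have : Pf E h w ω₀ ≤ ∫ _, w ω₀ ∂(E.P h ω₀) :=
    integral_mono (integrable_of_cont hw _) (integrable_const _) hle
  simp at this
  linarith

lemma Pf_add (E : EastProcess) (t : ℝ) {g h : Config → ℝ} (hg : Continuous g) (hh : Continuous h)
    (ω : Config) : Pf E t (fun η => g η + h η) ω = Pf E t g ω + Pf E t h ω := by
  have := E.markov t
  exact integral_add (integrable_of_cont hg _) (integrable_of_cont hh _)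

lemma cyl_eq_Res (E : EastProcess) {g : Config → ℝ} (hg : IsCylinder g)
    (hL : IsCylinder (eastGen E.p g)) : g = Res E (fun ω => g ω - eastGen E.p g ω) := by
  have hgc := hg.cont
  have hLc := hL.cont
  set φ : Config → ℝ := fun ω => g ω - eastGen E.p g ω with hφd
  have hφ : Continuous φ := hgc.sub hLc
  set u := Res E φ with hu
  have huc : Continuous u := Res_cont E hφ
  have hud : ∀ ω, HasDerivWithinAt (fun h => Pf E h u ω) (u ω - φ ω) (Set.Ici 0) 0 := by
    intro ω
    have h1 := (Res_deriv E hφ (u ω) 0 ω).hasDerivWithinAt (s := Set.Ici 0)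
    simp only [Real.exp_zero, intervalIntegral.integral_same, sub_zero, one_mul, Pf_zero] at h1
    refine h1.congr (fun h hh => Res_semi E hφ hh ω) ?_
    rw [Pf_zero]; simp
  have hgd : ∀ ω, HasDerivWithinAt (fun h => Pf E h g ω) (eastGen E.p g ω) (Set.Ici 0) 0 :=
    fun ω => E.generator g hg ω
  funext ω
  have hA := max_principle E (w := fun ω => u ω - g ω) (huc.sub hgc) (fun ω => by
    have := (hud ω).sub (hgd ω)
    refine (this.congr_deriv ?_).congr_of_eventuallyEq ?_ ?_
    · simp only [hφd]; ring
    · exact Eventually.of_forall (fun h => Pf_sub E h huc hgc ω)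
    · exact Pf_sub E 0 huc hgc ω) ω
  have hB := max_principle E (w := fun ω => g ω - u ω) (hgc.sub huc) (fun ω => by
    have := (hgd ω).sub (hud ω)
    refine (this.congr_deriv ?_).congr_of_eventuallyEq ?_ ?_
    · simp only [hφd]; ring
    · exact Eventually.of_forall (fun h => Pf_sub E h hgc huc ω)
    · exact Pf_sub E 0 hgc huc ω) ω
  linarith

lemma Pf_deriv (E : EastProcess) {g : Config → ℝ} (hg : IsCylinder g)
    (hL : IsCylinder (eastGen E.p g)) (ω : Config) (h : ℝ) (hh : 0 ≤ h) :
    HasDerivWithinAt (fun h => Pf E h g ω) (Pf E h (eastGen E.p g) ω) (Set.Ici 0) h := by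
  have hφ : Continuous (fun ω => g ω - eastGen E.p g ω) := hg.cont.sub hL.cont
  have key : ∀ h, 0 ≤ h → Pf E h g ω = Real.exp h * (g ω - ∫ r in (0 : ℝ)..h,
      Real.exp (-r) * Pf E r (fun ω => g ω - eastGen E.p g ω) ω) := by
    intro h hh
    have := Res_semi E hφ hh ω
    rwa [← cyl_eq_Res E hg hL] at this
  have h1 := (Res_deriv E hφ (g ω) h ω).hasDerivWithinAt (s := Set.Ici 0)
  rw [← key h hh, Pf_sub E h hg.cont hL.cont] at h1
  refine (h1.congr (fun r hr => key r hr) (key h hh)).congr_deriv ?_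
  ring

lemma Pf_lip (E : EastProcess) {g : Config → ℝ} (hg : IsCylinder g)
    (hL : IsCylinder (eastGen E.p g)) {C : ℝ} (hC : ∀ ω, |eastGen E.p g ω| ≤ C)
    (ω : Config) {h : ℝ} (hh : 0 ≤ h) : |Pf E h g ω - g ω| ≤ C * h := by
  have := norm_image_sub_le_of_norm_deriv_le_segment' (a := 0) (b := h)
    (f := fun h => Pf E h g ω) (f' := fun h => Pf E h (eastGen E.p g) ω) (C := C)
    (fun x hx => (Pf_deriv E hg hL ω x hx.1).mono (fun y hy => hy.1))
    (fun x _ => Pf_abs_le E x hC ω) h ⟨hh, le_rfl⟩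
  simpa [Pf_zero] using this

lemma Pf_step (E : EastProcess) {g : Config → ℝ} (hg : IsCylinder g)
    (hL : IsCylinder (eastGen E.p g)) (hLL : IsCylinder (eastGen E.p (eastGen E.p g)))
    {C : ℝ} (hC : ∀ ω, |eastGen E.p (eastGen E.p g) ω| ≤ C)
    (ω : Config) {h : ℝ} (hh : 0 ≤ h) :
    |Pf E h g ω - (g ω + h * eastGen E.p g ω)| ≤ C * h ^ 2 := by
  have hC0 : 0 ≤ C := (abs_nonneg _).trans (hC ω)
  have := norm_image_sub_le_of_norm_deriv_le_segment' (a := 0) (b := h)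
    (f := fun h => Pf E h g ω - h * eastGen E.p g ω)
    (f' := fun h => Pf E h (eastGen E.p g) ω - 1 * eastGen E.p g ω) (C := C * h)
    (fun x hx => ((Pf_deriv E hg hL ω x hx.1).mono (fun y hy => hy.1)).sub
      ((hasDerivWithinAt_id x _).mul_const _))
    (fun x hx => by
      rw [one_mul]
      refine (Pf_lip E hL hLL hC ω hx.1).trans ?_
      exact mul_le_mul_of_nonneg_left hx.2.le hC0) h ⟨hh, le_rfl⟩
  simp only [Pf_zero, Real.norm_eq_abs] at this
  calc _ = |Pf E h g ω - h * eastGen E.p g ω - (g ω - 0 * eastGen E.p g ω)| := by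
        congr 1; ring
    _ ≤ _ := this
    _ = _ := by ring

/-! ### Comparison with the Euler scheme -/

lemma one_step (E : EastProcess) (a : ℤ) (m : ℕ) {δ : ℝ} (hδ : 0 ≤ δ) {g : Config → ℝ} {B d : ℝ}
    (hB : ∀ ω, |g ω| ≤ B) (hdep : DependsOnF g (Set.Ico a (a + (m + 1 : ℕ))))
    (hd : ∀ ω, |g (Function.update ω (a + m) true) - g (Function.update ω (a + m) false)| ≤ d)
    (ω : Config) :
    |Pf E δ g ω - TT E.p a m δ g ω| ≤
      (2 * (m + 2 : ℕ) * (2 * (m + 1 : ℕ) * B)) * δ ^ 2 + δ * d := by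
  have h0 := E.hp0.le
  have h1 := E.hp1.le
  have e1 : eastGen E.p g = LM E.p a (m + 1) g := eastGen_eq E.p a (m + 1) hdep
  have hdep2 : DependsOnF (LM E.p a (m + 1) g) (Set.Ico a (a + (m + 2 : ℕ))) :=
    LM_dep (hdep.mono (Set.Ico_subset_Ico_right (by push_cast; omega))) E.p a (m + 1)
      (by intro i hi; simp only [Set.mem_Ico]; push_cast; omega)
  have e2 : eastGen E.p (LM E.p a (m + 1) g) = LM E.p a (m + 2) (LM E.p a (m + 1) g) :=
    eastGen_eq E.p a (m + 2) hdep2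
  have hdep3 : DependsOnF (LM E.p a (m + 2) (LM E.p a (m + 1) g)) (Set.Ico a (a + (m + 3 : ℕ))) :=
    LM_dep (hdep2.mono (Set.Ico_subset_Ico_right (by push_cast; omega))) E.p a (m + 2)
      (by intro i hi; simp only [Set.mem_Ico]; push_cast; omega)
  have hs := Pf_step E (cyl_of_Ico hdep) (by rw [e1]; exact cyl_of_Ico hdep2)
    (by rw [e1, e2]; exact cyl_of_Ico hdep3)
    (C := 2 * (m + 2 : ℕ) * (2 * (m + 1 : ℕ) * B))
    (by
      rw [e1, e2]
      intro ω
      exact LM_abs_le h0 h1 a (m + 2) (LM_abs_le h0 h1 a (m + 1) hB) ω) ω hδ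
  have e3 : g ω + δ * eastGen E.p g ω - TT E.p a m δ g ω =
      δ * (cc (a + m) ω * (Av E.p (a + m) g ω - g ω)) := by
    rw [e1, TT, LM, LM, Finset.sum_range_succ]
    ring
  have h4 : |g ω + δ * eastGen E.p g ω - TT E.p a m δ g ω| ≤ δ * d := by
    rw [e3, abs_mul, abs_mul, abs_of_nonneg hδ, abs_of_nonneg (cc_nonneg _ _)]
    apply mul_le_mul_of_nonneg_left _ hδ
    have := Av_sub_abs_le h0 h1 (a + m) ω (hd ω)
    calc _ ≤ 1 * |Av E.p (a + m) g ω - g ω| :=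
          mul_le_mul_of_nonneg_right (cc_le_one _ _) (abs_nonneg _)
      _ ≤ _ := by linarith
  calc _ = |(Pf E δ g ω - (g ω + δ * eastGen E.p g ω)) +
        (g ω + δ * eastGen E.p g ω - TT E.p a m δ g ω)| := by congr 1; ring
    _ ≤ _ := (abs_add_le _ _).trans (add_le_add hs h4)

lemma euler_err (E : EastProcess) (a : ℤ) (m : ℕ) {δ ε : ℝ} (hδ : 0 ≤ δ) {f : Config → ℝ}
    (hdep : DependsOnF f (Set.Ico a (a + (m + 1 : ℕ)))) (N : ℕ)
    (hstep : ∀ j < N, ∀ ω,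
      |Pf E δ (FF E.p a m δ f j) ω - TT E.p a m δ (FF E.p a m δ f j) ω| ≤ ε)
    (ω : Config) : |Pf E (N * δ) f ω - FF E.p a m δ f N ω| ≤ N * ε := by
  induction N generalizing ω with
  | zero => simp [Pf_zero, FF]
  | succ N ih =>
    have ih' := ih (fun j hj => hstep j (by omega))
    have hNδ : 0 ≤ N * δ := by positivity
    have hfc : Continuous f := (cyl_of_Ico hdep).cont
    have hFc : Continuous (FF E.p a m δ f N) := (cyl_of_Ico (FF_dep a m hdep N)).cont
    have e : Pf E ((N + 1 : ℕ) * δ) f ω = Pf E δ (Pf E (N * δ) f) ω := by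
      rw [← Pf_semi E hNδ hδ hfc]
      congr 1; push_cast; ring
    have h2 : |Pf E δ (fun η => Pf E (N * δ) f η - FF E.p a m δ f N η) ω| ≤ N * ε :=
      Pf_abs_le E δ ih' ω
    rw [Pf_sub E δ (Pf_cont E hNδ hfc) hFc] at h2
    have h3 := hstep N (by omega) ω
    rw [e]
    calc _ = |(Pf E δ (Pf E (N * δ) f) ω - Pf E δ (FF E.p a m δ f N) ω) +
          (Pf E δ (FF E.p a m δ f N) ω - TT E.p a m δ (FF E.p a m δ f N) ω)| := by
          congr 1; simp only [FF]; ring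
      _ ≤ _ := (abs_add_le _ _).trans (add_le_add h2 h3)
      _ = _ := by push_cast; ring


lemma pointwise_N (E : EastProcess) (hgap : 0 < gap E) (a : ℤ) (n r N : ℕ) (hr : 1 ≤ r)
    (hN : 1 ≤ N) {t : ℝ} (ht : 0 ≤ t)
    (hNt : 2 * (t / N) * gap E + (t / N) * (n + r : ℕ) ≤ 1) {f : Config → ℝ} {B : ℝ}
    (hB : ∀ ω, |f ω| ≤ B) (hdep : DependsOnF f (Set.Ico a (a + (n + 1 : ℕ))))
    (hmean : ∫ ω, f ω ∂E.μ = 0) (ω : Config) (hω : ω (a + (n + 1 : ℕ)) = false) :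
    |Pf E t f ω| ≤
      Real.sqrt (((min E.p (1 - E.p)) ^ (n + 1))⁻¹ *
        (Real.exp (-2 * t * gap E) * variance f E.μ +
          (t ^ 2 * (2 * (n + r : ℕ) * B) ^ 2) / N)) +
      ((2 * (n + r + 2 : ℕ) * (2 * (n + r + 1 : ℕ) * B)) * t ^ 2 / N +
        t * (2 * B) * (t ^ r / r.factorial)) := by
  have hNpos : (0 : ℝ) < N := by exact_mod_cast hN
  set δ := t / N with hδdef
  have hδ : 0 ≤ δ := by positivity
  have hNδ : N * δ = t := by rw [hδdef]; field_simp
  have hB0 : 0 ≤ B := (abs_nonneg _).trans (hB ω)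
  have hδm : δ * (n + r : ℕ) ≤ 1 := by nlinarith [mul_nonneg hδ hgap.le]
  have hdep' : DependsOnF f (Set.Ico a (a + (n + r + 1 : ℕ))) :=
    hdep.mono (Set.Ico_subset_Ico le_rfl (by push_cast; omega))
  have hstep : ∀ j < N, ∀ ω,
      |Pf E δ (FF E.p a (n + r) δ f j) ω - TT E.p a (n + r) δ (FF E.p a (n + r) δ f j) ω| ≤
      (2 * (n + r + 2 : ℕ) * (2 * (n + r + 1 : ℕ) * B)) * δ ^ 2 +
        δ * (2 * B * (t ^ r / r.factorial)) := by
    intro j hj ω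
    refine one_step E a (n + r) hδ (FF_abs_le E.hp0.le E.hp1.le a (n + r) hδ hδm hB j)
      (FF_dep a (n + r) hdep' j) (fun ω => ?_) ω
    refine (FF_grad E.hp0.le E.hp1.le a n (n + r) hδ hδm hB hdep j r ω).trans ?_
    refine mul_le_mul_of_nonneg_left ?_ (by positivity)
    have h1 : (j.choose r : ℝ) ≤ (N : ℝ) ^ r / r.factorial :=
      (Nat.cast_le.mpr (Nat.choose_le_choose r hj.le)).trans (Nat.choose_le_pow_div r N)
    calc (j.choose r : ℝ) * δ ^ r ≤ (N : ℝ) ^ r / r.factorial * δ ^ r :=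
          mul_le_mul_of_nonneg_right h1 (by positivity)
      _ = t ^ r / r.factorial := by rw [← hNδ, mul_pow]; ring
  have herr := euler_err E a (n + r) hδ hdep' N hstep ω
  rw [hNδ] at herr
  have hvar := FF_var E hgap a (n + 1) (n + r) hδ hNt hB hdep hmean N (n + 1) le_rfl (by omega) ω hω
  have hge := Ew_ge E.hp0 E.hp1 a (n + 1) (g := fun η => (FF E.p a (n + r) δ f N η) ^ 2)
    (fun η => sq_nonneg _) ω
  have hmin : 0 < (min E.p (1 - E.p)) ^ (n + 1) :=
    pow_pos (lt_min E.hp0 (by linarith [E.hp1])) _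
  have hexp : (1 - 2 * δ * gap E) ^ N ≤ Real.exp (-2 * t * gap E) := by
    have h0 : 0 ≤ 1 - 2 * δ * gap E := by
      have : 0 ≤ δ * (n + r : ℕ) := by positivity
      linarith
    calc (1 - 2 * δ * gap E) ^ N ≤ (Real.exp (-(2 * δ * gap E))) ^ N :=
          pow_le_pow_left₀ h0 (by linarith [Real.add_one_le_exp (-(2 * δ * gap E))]) N
      _ = Real.exp (-2 * t * gap E) := by
          rw [← Real.exp_nat_mul, ← hNδ]; congr 1; ring
  have hvn : 0 ≤ variance f E.μ := variance_nonneg _ _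
  have hFF : |FF E.p a (n + r) δ f N ω| ≤ Real.sqrt (((min E.p (1 - E.p)) ^ (n + 1))⁻¹ *
        (Real.exp (-2 * t * gap E) * variance f E.μ +
          (t ^ 2 * (2 * (n + r : ℕ) * B) ^ 2) / N)) := by
    apply Real.abs_le_sqrt
    rw [inv_mul_eq_div, le_div_iff₀ hmin]
    have e : (N : ℝ) * (δ ^ 2 * (2 * (n + r : ℕ) * B) ^ 2) =
        (t ^ 2 * (2 * (n + r : ℕ) * B) ^ 2) / N := by
      rw [hδdef]; field_simp
    have := mul_le_mul_of_nonneg_right hexp hvn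
    rw [e] at hvar
    linarith
  have e2 : (N : ℝ) * ((2 * (n + r + 2 : ℕ) * (2 * (n + r + 1 : ℕ) * B)) * δ ^ 2 +
        δ * (2 * B * (t ^ r / r.factorial))) =
      (2 * (n + r + 2 : ℕ) * (2 * (n + r + 1 : ℕ) * B)) * t ^ 2 / N +
        t * (2 * B) * (t ^ r / r.factorial) := by
    have : (N : ℝ) * δ ^ 2 = t ^ 2 / N := by rw [hδdef]; field_simp
    rw [mul_add]
    congr 1
    · rw [← mul_assoc, mul_comm (N : ℝ), mul_assoc, this]; ring
    · rw [← mul_assoc, hNδ]; ring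
  rw [e2] at herr
  have := abs_sub_abs_le_abs_sub (Pf E t f ω) (FF E.p a (n + r) δ f N ω)
  linarith

lemma pointwise (E : EastProcess) (hgap : 0 < gap E) (a : ℤ) (n : ℕ) {t : ℝ} (ht : 0 ≤ t)
    {f : Config → ℝ} (hdep : DependsOnF f (Set.Ico a (a + (n + 1 : ℕ))))
    (hmean : ∫ ω, f ω ∂E.μ = 0) (ω : Config) (hω : ω (a + (n + 1 : ℕ)) = false) :
    |Pf E t f ω| ≤ Real.sqrt (variance f E.μ) * (1 / min E.p (1 - E.p)) ^ (n + 1) *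
        Real.exp (-t * gap E) := by
  obtain ⟨B, hB⟩ := bdd_of_cont (cyl_of_Ico hdep).cont
  have hm : 0 < min E.p (1 - E.p) := lt_min E.hp0 (by linarith [E.hp1])
  have hm1 : min E.p (1 - E.p) ≤ 1 := (min_le_left _ _).trans E.hp1.le
  have hvn : 0 ≤ variance f E.μ := variance_nonneg _ _
  have hr : ∀ r : ℕ, 1 ≤ r → |Pf E t f ω| ≤
      Real.sqrt (((min E.p (1 - E.p)) ^ (n + 1))⁻¹ *
        (Real.exp (-2 * t * gap E) * variance f E.μ + 0)) +
      (0 + t * (2 * B) * (t ^ r / r.factorial)) := by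
    intro r hr
    have hlim : Tendsto (fun N : ℕ => Real.sqrt (((min E.p (1 - E.p)) ^ (n + 1))⁻¹ *
        (Real.exp (-2 * t * gap E) * variance f E.μ +
          (t ^ 2 * (2 * (n + r : ℕ) * B) ^ 2) / (N : ℝ))) +
      ((2 * (n + r + 2 : ℕ) * (2 * (n + r + 1 : ℕ) * B)) * t ^ 2 / (N : ℝ) +
        t * (2 * B) * (t ^ r / r.factorial))) atTop (𝓝 (Real.sqrt (((min E.p (1 - E.p)) ^ (n + 1))⁻¹ *
        (Real.exp (-2 * t * gap E) * variance f E.μ + 0)) +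
      (0 + t * (2 * B) * (t ^ r / r.factorial)))) := by
      refine Tendsto.add ?_ (Tendsto.add (tendsto_const_div_atTop_nhds_zero_nat _) tendsto_const_nhds)
      exact (Real.continuous_sqrt.tendsto _).comp
        (Tendsto.const_mul _ (Tendsto.add tendsto_const_nhds
          (tendsto_const_div_atTop_nhds_zero_nat _)))
    refine ge_of_tendsto hlim ?_
    have hs : Tendsto (fun N : ℕ => 2 * (t / (N : ℝ)) * gap E + (t / (N : ℝ)) * (n + r : ℕ)) atTop
        (𝓝 (2 * 0 * gap E + 0 * (n + r : ℕ))) :=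
      Tendsto.add (((tendsto_const_div_atTop_nhds_zero_nat t).const_mul 2).mul_const _)
        ((tendsto_const_div_atTop_nhds_zero_nat t).mul_const _)
    have hev := hs.eventually_le_const (u := 1) (by norm_num)
    filter_upwards [hev, eventually_ge_atTop 1] with N hN hN1
    exact pointwise_N E hgap a n r N hr hN1 ht hN hB hdep hmean ω hω
  have hlim2 : Tendsto (fun r : ℕ => Real.sqrt (((min E.p (1 - E.p)) ^ (n + 1))⁻¹ *
        (Real.exp (-2 * t * gap E) * variance f E.μ + 0)) +
      (0 + t * (2 * B) * (t ^ r / r.factorial))) atTop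
      (𝓝 (Real.sqrt (((min E.p (1 - E.p)) ^ (n + 1))⁻¹ *
        (Real.exp (-2 * t * gap E) * variance f E.μ + 0)) + (0 + t * (2 * B) * 0))) :=
    Tendsto.add tendsto_const_nhds (Tendsto.add tendsto_const_nhds
      (Tendsto.const_mul _ (FloorSemiring.tendsto_pow_div_factorial_atTop t)))
  have h := ge_of_tendsto hlim2 (by filter_upwards [eventually_ge_atTop 1] with r h using hr r h)
  refine h.trans ?_
  simp only [mul_zero, add_zero]
  apply Real.sqrt_le_iff.mpr
  refine ⟨by positivity, ?_⟩
  rw [mul_pow, mul_pow, Real.sq_sqrt hvn, ← Real.exp_nat_mul, one_div, inv_pow]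
  have e : ((2 : ℕ) : ℝ) * (-t * gap E) = -2 * t * gap E := by push_cast; ring
  rw [e]
  have h1 : 1 ≤ ((min E.p (1 - E.p)) ^ (n + 1))⁻¹ :=
    (one_le_inv₀ (by positivity)).mpr (pow_le_one₀ hm.le hm1)
  have h2 : ((min E.p (1 - E.p)) ^ (n + 1))⁻¹ ≤ (((min E.p (1 - E.p)) ^ (n + 1))⁻¹) ^ 2 := by
    nlinarith
  have h3 : 0 ≤ Real.exp (-2 * t * gap E) * variance f E.μ := by positivity
  calc _ ≤ (((min E.p (1 - E.p)) ^ (n + 1))⁻¹) ^ 2 *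
        (Real.exp (-2 * t * gap E) * variance f E.μ) := mul_le_mul_of_nonneg_right h2 h3
    _ = _ := by ring

lemma front_false {η : Config} (h : η ∈ LO) : η (front η) = false := by
  obtain ⟨⟨y, hy⟩, hx⟩ := h
  refine Int.csInf_mem (s := {x : ℤ | η x = false}) hx ⟨y, fun x hx => ?_⟩
  by_contra hlt
  have := hy x (by omega)
  simp_all

/-- **Relaxation behind the front at intermediate times** (Proposition 4.1 of the paper):
if `f` is a cylinder function with support in `⟦-xm, -xp⟧` (`1 ≤ xp ≤ xm`) and `μ(f) = 0`,
then for every `ω ∈ LO₀` and `0 ≤ s ≤ t`,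
`|E_ω[f(ω_{X(ω(t-s)) + ·}(t))]| ≤ Var_μ(f)^{1/2} (1/(p ∧ q))^{xm} e^{-s gap}`. -/
theorem relaxation_at_front_intermediate (E : EastProcess) (hgap : 0 < gap E)
    (xp xm : ℕ) (hxp : 1 ≤ xp) (hx : xp ≤ xm)
    (f : Config → ℝ) (hf : Measurable f)
    (hsupp : DependsOnF f (Set.Icc (-(xm : ℤ)) (-(xp : ℤ))))
    (hmean : ∫ ω, f ω ∂E.μ = 0)
    (ω : Config) (hω : ω ∈ LO₀) (s t : ℝ) (hs : 0 ≤ s) (hst : s ≤ t) :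
    |∫ η in LO, (∫ ξ, f (fun y => ξ (front η + y)) ∂(E.P s η)) ∂(E.P (t - s) ω)| ≤
      Real.sqrt (variance f E.μ) * (1 / min E.p (1 - E.p)) ^ xm *
        Real.exp (-s * gap E) := by
  obtain ⟨n, rfl⟩ : ∃ n, xm = n + 1 := ⟨xm - 1, by omega⟩
  have hdep : DependsOnF f (Set.Ico (-((n + 1 : ℕ) : ℤ)) (-((n + 1 : ℕ) : ℤ) + (n + 1 : ℕ))) :=
    hsupp.mono (fun x hx' => by
      simp only [Set.mem_Icc, Set.mem_Ico] at hx' ⊢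
      omega)
  have hm : 0 < min E.p (1 - E.p) := lt_min E.hp0 (by linarith [E.hp1])
  have hC0 : 0 ≤ Real.sqrt (variance f E.μ) * (1 / min E.p (1 - E.p)) ^ (n + 1) *
        Real.exp (-s * gap E) := by positivity
  have := E.markov (t - s)
  have hb := norm_setIntegral_le_of_norm_le_const (μ := E.P (t - s) ω) (s := LO)
    (f := fun η => ∫ ξ, f (fun y => ξ (front η + y)) ∂(E.P s η))
    (C := Real.sqrt (variance f E.μ) * (1 / min E.p (1 - E.p)) ^ (n + 1) *
        Real.exp (-s * gap E)) (measure_lt_top _ _) (fun η hη => ?_)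
  · rw [Real.norm_eq_abs] at hb
    refine hb.trans (mul_le_of_le_one_right hC0 measureReal_le_one)
  · have hc : Continuous (shift (front η)) := by
      unfold shift; fun_prop
    have e : ∫ ξ, f (fun y => ξ (front η + y)) ∂(E.P s η) = Pf E s f (shift (front η) η) := by
      unfold Pf
      rw [E.shiftComm s hs, integral_map hc.measurable.aemeasurable
        hf.aestronglyMeasurable]
      refine integral_congr_ae (ae_of_all _ fun ξ => ?_)
      refine congrArg f (funext fun z => ?_)
      simp only [shift, add_comm]
    rw [e, Real.norm_eq_abs]
    refine pointwise E hgap _ n hs hdep hmean _ ?_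
    rw [neg_add_cancel]
    simpa [shift] using front_false hη

end
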